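/- arXiv:2203.12133 — 8 statements merged into one kernel-verified Lean document; each statement's English description precedes it below -/
import Mathlib

section
/- Fix a transition kernel P, an initial distribution z₀ ≥ 0, and opponents' joint distribution x^{-i}. Suppose player i's objective F^i : ({0,...,T} × S × A → ℝ) → ℝ is twice continuously differentiable on an open convex set containing 𝒳(P, z₀), its gradient satisfies ∂F^i/∂x(t,s,a)(x) = ℓ^i(t,s,a)(x, x^{-i}) for all (t,s,a), and its Hessian is positive definite at every point of that set. Then x̂ ∈ 𝒳(P, z₀) is the unique minimizer of F^i over 𝒳(P, z₀) if and only if x̂ satisfies the Bellman condition for the costs c(t,s,a) = ℓ^i(t,s,a)(x̂, x^{-i}) with kernel P. -/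
open Finset

/-- The feasible set 𝒳(P, z₀) of state-action distributions. -/
def Feas {S A : Type*} [Fintype S] [Fintype A] (T : ℕ)
    (P : Fin (T+1) → S → S → A → ℝ) (z0 : S → ℝ) :
    Set (Fin (T+1) → S → A → ℝ) :=
  {x | (∀ t s a, 0 ≤ x t s a) ∧
    (∀ s, ∑ a, x 0 s a = z0 s) ∧
    ∀ (t : ℕ) (ht : t < T), ∀ s,
      ∑ s', ∑ a, P ⟨t+1, by omega⟩ s s' a * x ⟨t, by omega⟩ s' a
        = ∑ a, x ⟨t+1, by omega⟩ s a}

/-- `P` is a transition kernel: nonnegative, and column-stochastic for t ∈ {1,…,T}. -/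
def IsKernel {S A : Type*} [Fintype S] (T : ℕ)
    (P : Fin (T+1) → S → S → A → ℝ) : Prop :=
  (∀ t s' s a, 0 ≤ P t s' s a) ∧
    ∀ t : Fin (T+1), t ≠ 0 → ∀ s a, ∑ s', P t s' s a = 1

/-- Backwards recursion for Q-values: `Qaux T P c k` is the Q-value at time T - k. -/
noncomputable def Qaux {S A : Type*} [Fintype S] [Fintype A] [Nonempty A] (T : ℕ)
    (P : Fin (T+1) → S → S → A → ℝ) (c : Fin (T+1) → S → A → ℝ) : ℕ → S → A → ℝ
  | 0, s, a => c (Fin.last T) s a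
  | k+1, s, a =>
    c ⟨T - (k+1), by omega⟩ s a +
      ∑ s', P ⟨T - k, by omega⟩ s' s a *
        Finset.univ.inf' Finset.univ_nonempty (Qaux T P c k s')

/-- Q-values: `Q(T,s,a) = c(T,s,a)`,
`Q(t-1,s,a) = c(t-1,s,a) + ∑_{s'} P(t,s',s,a) · min_{a'} Q(t,s',a')`. -/
noncomputable def Qval {S A : Type*} [Fintype S] [Fintype A] [Nonempty A] (T : ℕ)
    (P : Fin (T+1) → S → S → A → ℝ) (c : Fin (T+1) → S → A → ℝ)
    (t : Fin (T+1)) : S → A → ℝ :=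
  Qaux T P c (T - t.1)

/-- x satisfies the Bellman condition for costs c:
every state-action pair played with positive probability achieves the minimal Q-value. -/
def BellmanCond {S A : Type*} [Fintype S] [Fintype A] [Nonempty A] (T : ℕ)
    (P : Fin (T+1) → S → S → A → ℝ) (c : Fin (T+1) → S → A → ℝ)
    (x : Fin (T+1) → S → A → ℝ) : Prop :=
  ∀ t s a, 0 < x t s a →
    Qval T P c t s a = Finset.univ.inf' Finset.univ_nonempty (Qval T P c t s)

/-- Standard basis vector of the space of state-action functions. -/
def eb {S A : Type*} [DecidableEq S] [DecidableEq A] (T : ℕ)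
    (t : Fin (T+1)) (s : S) (a : A) : Fin (T+1) → S → A → ℝ :=
  fun t' s' a' => if t' = t ∧ s' = s ∧ a' = a then 1 else 0

/-- Standard basis vector of the joint (N-player) space. -/
def ebN {S A : Type*} [DecidableEq S] [DecidableEq A] (N T : ℕ)
    (i : Fin N) (t : Fin (T+1)) (s : S) (a : A) :
    Fin N → Fin (T+1) → S → A → ℝ :=
  fun j => if j = i then eb T t s a else 0

/-!
The Q-values telescope along the flow constraints defining `Feas T P z0`: the total cost of a
feasible `x` is a constant, depending only on `z0`, plus the total of the advantages
`Q(t,s,a) - min Q(t,s,·) ≥ 0` weighted by `x`. A greedy deterministic policy makes this second term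
vanish, so the Bellman condition for `c` says exactly that `x` minimizes the linear functional
`∑ c(t,s,a) x(t,s,a)` over the feasible set. When `c` is the gradient at `x̂` of a strictly convex
`F`, this is the first-order optimality condition for `x̂`, which for such `F` characterizes the
unique minimizer.
-/

section Convexity

variable {E : Type*}

lemma strictConvexOn_of_comp_lineMap [AddCommGroup E] [Module ℝ E] {s : Set E} {f : E → ℝ}
    (hs : Convex ℝ s)
    (hf : ∀ x ∈ s, ∀ y ∈ s, x ≠ y →
      StrictConvexOn ℝ (Set.Icc (0 : ℝ) 1) (f ∘ AffineMap.lineMap x y)) :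
    StrictConvexOn ℝ s f := by
  refine ⟨hs, fun x hx y hy hxy a b ha hb hab => ?_⟩
  have hline : AffineMap.lineMap x y b = a • x + b • y := by
    rw [AffineMap.lineMap_apply_module, ← hab, add_sub_cancel_right]
  simpa [hline] using (hf x hx y hy hxy).2 (Set.left_mem_Icc.2 zero_le_one)
    (Set.right_mem_Icc.2 zero_le_one) zero_ne_one ha hb hab

lemma forall_lt_iff_isMinOn_of_strictConvexOn [AddCommMonoid E] [SMul ℝ E] {s : Set E}
    {f : E → ℝ} {x : E} (hf : StrictConvexOn ℝ s f) (hx : x ∈ s) :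
    (∀ y ∈ s, y ≠ x → f x < f y) ↔ IsMinOn f s x := by
  constructor
  · intro hlt
    refine isMinOn_iff.2 fun y hy => ?_
    rcases eq_or_ne y x with rfl | hne
    exacts [le_rfl, (hlt y hy hne).le]
  · intro hmin y hy hne
    refine (hmin hy).lt_of_ne fun heq => hne ?_
    exact hf.eq_of_isMinOn (fun z hz => heq.symm.trans_le (hmin hz)) hmin hy hx

lemma strictConvexOn_of_hasDerivWithinAt2_pos {D : Set ℝ} (hD : Convex ℝ D) {f f' f'' : ℝ → ℝ}
    (hf : ContinuousOn f D) (hf' : ∀ x ∈ interior D, HasDerivWithinAt f (f' x) (interior D) x)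
    (hf'' : ∀ x ∈ interior D, HasDerivWithinAt f' (f'' x) (interior D) x)
    (hpos : ∀ x ∈ interior D, 0 < f'' x) : StrictConvexOn ℝ D f := by
  have hderiv : (interior D).EqOn (deriv f) f' := deriv_eqOn isOpen_interior hf'
  refine strictConvexOn_of_deriv2_pos hD hf fun x hx => ?_
  have hderiv2 : deriv (deriv f) x = f'' x :=
    deriv_eqOn isOpen_interior (fun y hy => (hf'' y hy).congr hderiv (hderiv hy)) hx
  exact (hpos x hx).trans_eq hderiv2.symm

variable [NormedAddCommGroup E] [NormedSpace ℝ E] {s : Set E} {f : E → ℝ} {x : E}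

lemma strictConvexOn_of_hasFDerivWithinAt2_pos {f' : E → E →L[ℝ] ℝ} {f'' : E → E →L[ℝ] E →L[ℝ] ℝ}
    (hs : Convex ℝ s) (hf' : ∀ x ∈ s, HasFDerivWithinAt f (f' x) s x)
    (hf'' : ∀ x ∈ s, HasFDerivWithinAt f' (f'' x) s x)
    (hpos : ∀ x ∈ s, ∀ v ≠ 0, 0 < f'' x v v) : StrictConvexOn ℝ s f := by
  refine strictConvexOn_of_comp_lineMap hs fun x hx y hy hxy => ?_
  let γ : ℝ →ᵃ[ℝ] E := AffineMap.lineMap x y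
  have hmaps : Set.MapsTo γ (Set.Icc 0 1) s := hs.mapsTo_lineMap hx hy
  have hline (t : ℝ) : HasDerivWithinAt γ (y - x) (Set.Icc 0 1) t :=
    AffineMap.hasDerivWithinAt_lineMap
  have hderiv : ∀ t ∈ Set.Icc (0 : ℝ) 1,
      HasDerivWithinAt (f ∘ γ) (f' (γ t) (y - x)) (Set.Icc 0 1) t := fun t ht =>
    (hf' _ (hmaps ht)).comp_hasDerivWithinAt t (hline t) hmaps
  have hderiv2 : ∀ t ∈ Set.Icc (0 : ℝ) 1,
      HasDerivWithinAt (fun t => f' (γ t) (y - x)) (f'' (γ t) (y - x) (y - x))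
        (Set.Icc 0 1) t := fun t ht => by
    simpa using ((hf'' _ (hmaps ht)).comp_hasDerivWithinAt t (hline t) hmaps).clm_apply
      (hasDerivWithinAt_const t _ (y - x))
  have hint : interior (Set.Icc (0 : ℝ) 1) ⊆ Set.Icc 0 1 := interior_subset
  exact strictConvexOn_of_hasDerivWithinAt2_pos (convex_Icc 0 1)
    (fun t ht => (hderiv t ht).continuousWithinAt)
    (fun t ht => (hderiv t (hint ht)).mono hint) (fun t ht => (hderiv2 t (hint ht)).mono hint)
    fun t ht => hpos _ (hmaps (hint ht)) _ (sub_ne_zero.2 hxy.symm)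

lemma strictConvexOn_of_fderiv_fderiv_pos (hs : IsOpen s) (hconv : Convex ℝ s)
    (hf : ContDiffOn ℝ 2 f s) (hpos : ∀ x ∈ s, ∀ v ≠ 0, 0 < fderiv ℝ (fderiv ℝ f) x v v) :
    StrictConvexOn ℝ s f := by
  have hderiv : DifferentiableOn ℝ f s := hf.differentiableOn two_ne_zero
  have hderiv2 : DifferentiableOn ℝ (fderiv ℝ f) s :=
    (hf.fderiv_of_isOpen (m := 1) hs one_add_one_eq_two.le).differentiableOn one_ne_zero
  exact strictConvexOn_of_hasFDerivWithinAt2_pos hconv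
    (fun x hx => (hderiv.hasFDerivAt (hs.mem_nhds hx)).hasFDerivWithinAt)
    (fun x hx => (hderiv2.hasFDerivAt (hs.mem_nhds hx)).hasFDerivWithinAt) hpos

lemma fderivWithin_sub_le_of_convexOn {f' : E →L[ℝ] ℝ} {y : E} (hf : ConvexOn ℝ s f)
    (hf' : HasFDerivWithinAt f f' s x) (hx : x ∈ s) (hy : y ∈ s) : f' (y - x) ≤ f y - f x := by
  set γ : ℝ →ᵃ[ℝ] E := AffineMap.lineMap x y with hγ
  have hmaps : Set.MapsTo γ (Set.Icc 0 1) s := hf.1.mapsTo_lineMap hx hy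
  have hconv : ConvexOn ℝ (Set.Icc 0 1) (f ∘ γ) :=
    (hf.comp_affineMap γ).subset hmaps (convex_Icc 0 1)
  have hderiv : HasDerivWithinAt (f ∘ γ) (f' (y - x)) (Set.Icc 0 1) 0 :=
    HasFDerivWithinAt.comp_hasDerivWithinAt 0 (by simpa [hγ] using hf')
      AffineMap.hasDerivWithinAt_lineMap hmaps
  simpa [slope_def_field, hγ] using hconv.le_slope_of_hasDerivWithinAt
    (Set.left_mem_Icc.2 zero_le_one) (Set.right_mem_Icc.2 zero_le_one) zero_lt_one hderiv

lemma isMinOn_iff_isMinOn_fderivWithin_of_convexOn {f' : E →L[ℝ] ℝ} (hf : ConvexOn ℝ s f)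
    (hf' : HasFDerivWithinAt f f' s x) (hx : x ∈ s) : IsMinOn f s x ↔ IsMinOn f' s x := by
  constructor <;> intro hmin <;> refine isMinOn_iff.2 fun y hy => ?_
  · have hdir : y - x ∈ posTangentConeAt s x :=
      sub_mem_posTangentConeAt_of_segment_subset (hf.1.segment_subset hx hy)
    simpa using hmin.localize.hasFDerivWithinAt_nonneg hf' hdir
  · have hle := fderivWithin_sub_le_of_convexOn hf hf' hx hy
    rw [map_sub] at hle
    linarith [isMinOn_iff.1 hmin y hy]

end Convexity

section DynamicProgramming

variable {S A : Type*} [Fintype S] {T : ℕ}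
  {P : Fin (T + 1) → S → S → A → ℝ} {z0 : S → ℝ} {c x : Fin (T + 1) → S → A → ℝ}

/-- The state marginals generated from the initial distribution `z0` by the deterministic policy
`π`, which plays the action `π t s` in state `s` at time `t`. -/
def policyMarginal (P : Fin (T + 1) → S → S → A → ℝ) (z0 : S → ℝ) (π : Fin (T + 1) → S → A) :
    Fin (T + 1) → S → ℝ :=
  Fin.induction z0 fun i z s => ∑ s', P i.succ s s' (π i.castSucc s') * z s'

lemma policyMarginal_succ (π : Fin (T + 1) → S → A) (i : Fin T) (s : S) :
    policyMarginal P z0 π i.succ s =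
      ∑ s', P i.succ s s' (π i.castSucc s') * policyMarginal P z0 π i.castSucc s' := by
  simp only [policyMarginal, Fin.induction_succ]

lemma policyMarginal_nonneg (hP : ∀ t s' s a, 0 ≤ P t s' s a) (hz0 : ∀ s, 0 ≤ z0 s)
    (π : Fin (T + 1) → S → A) (t : Fin (T + 1)) (s : S) : 0 ≤ policyMarginal P z0 π t s := by
  induction t using Fin.induction generalizing s with
  | zero => exact hz0 s
  | succ i ih =>
    rw [policyMarginal_succ]
    exact sum_nonneg fun s' _ => mul_nonneg (hP _ _ _ _) (ih s')

/-- The state-action distribution of the deterministic policy `π` started from `z0`. -/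
def policyOccupation [DecidableEq A] (P : Fin (T + 1) → S → S → A → ℝ) (z0 : S → ℝ)
    (π : Fin (T + 1) → S → A) (t : Fin (T + 1)) (s : S) : A → ℝ :=
  Pi.single (π t s) (policyMarginal P z0 π t s)

variable [Fintype A]

lemma mem_feas_iff : x ∈ Feas T P z0 ↔
    (∀ t s a, 0 ≤ x t s a) ∧ (∀ s, ∑ a, x 0 s a = z0 s) ∧
      ∀ (i : Fin T) s, ∑ s', ∑ a, P i.succ s s' a * x i.castSucc s' a = ∑ a, x i.succ s a :=
  and_congr_right' <| and_congr_right' ⟨fun h i => h i i.2, fun h t ht => h ⟨t, ht⟩⟩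

lemma nonneg_of_feas_nonempty (h : (Feas T P z0).Nonempty) (s : S) : 0 ≤ z0 s := by
  obtain ⟨x, hx⟩ := h
  exact (sum_nonneg fun a _ => hx.1 0 s a).trans_eq (hx.2.1 s)

lemma convex_feas : Convex ℝ (Feas T P z0) := by
  intro x hx y hy a b ha hb hab
  rw [mem_feas_iff] at hx hy ⊢
  obtain ⟨hx_nonneg, hx_init, hx_flow⟩ := hx
  obtain ⟨hy_nonneg, hy_init, hy_flow⟩ := hy
  simp only [Pi.add_apply, Pi.smul_apply, smul_eq_mul]
  refine ⟨fun t s u => ?_, fun s => ?_, fun i s => ?_⟩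
  · exact add_nonneg (mul_nonneg ha (hx_nonneg t s u)) (mul_nonneg hb (hy_nonneg t s u))
  · rw [sum_add_distrib, ← mul_sum, ← mul_sum, hx_init, hy_init, ← add_mul, hab, one_mul]
  · simp only [sum_add_distrib, ← mul_sum, ← hx_flow, ← hy_flow, mul_add, mul_left_comm _ a,
      mul_left_comm _ b]

lemma policyOccupation_mem_feas [DecidableEq A] (hP : ∀ t s' s a, 0 ≤ P t s' s a)
    (hz0 : ∀ s, 0 ≤ z0 s) (π : Fin (T + 1) → S → A) : policyOccupation P z0 π ∈ Feas T P z0 := by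
  refine mem_feas_iff.2 ⟨fun t s => ?_, fun s => ?_, fun i s => ?_⟩
  · exact (Pi.single_nonneg (α := fun _ : A => ℝ)).2 (policyMarginal_nonneg hP hz0 π t s)
  · simp [policyOccupation, policyMarginal]
  · simp [policyOccupation, policyMarginal_succ, Pi.single_apply]

/-- The expected cost `∑ₜ ∑ₛ ∑ₐ c(t,s,a) x(t,s,a)` of the state-action distribution `x`; for fixed
`c` it is the linear objective of the Markov decision problem with costs `c`. -/
def totalCost (c x : Fin (T + 1) → S → A → ℝ) : ℝ :=
  ∑ t, ∑ s, ∑ a, c t s a * x t s a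

lemma totalCost_nonneg (hc : ∀ t s a, 0 ≤ c t s a) (hx : ∀ t s a, 0 ≤ x t s a) :
    0 ≤ totalCost c x :=
  sum_nonneg fun t _ => sum_nonneg fun s _ => sum_nonneg fun a _ =>
    mul_nonneg (hc t s a) (hx t s a)

lemma totalCost_eq_zero_iff (hc : ∀ t s a, 0 ≤ c t s a) (hx : ∀ t s a, 0 ≤ x t s a) :
    totalCost c x = 0 ↔ ∀ t s a, c t s a * x t s a = 0 := by
  have hterm (t s a) : 0 ≤ c t s a * x t s a := mul_nonneg (hc t s a) (hx t s a)
  have hstate (t s) : 0 ≤ ∑ a, c t s a * x t s a := sum_nonneg fun a _ => hterm t s a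
  have htime (t) : 0 ≤ ∑ s, ∑ a, c t s a * x t s a := sum_nonneg fun s _ => hstate t s
  simp [totalCost, sum_eq_zero_iff_of_nonneg, hterm, hstate, htime]

lemma linearMap_eq_totalCost [DecidableEq S] [DecidableEq A]
    (L : (Fin (T + 1) → S → A → ℝ) →ₗ[ℝ] ℝ) :
    ⇑L = totalCost fun t s a => L (eb T t s a) := by
  ext v
  have hv : v = ∑ t, ∑ s, ∑ a, v t s a • eb T t s a := by
    ext t s a
    simp [eb, ite_and, Finset.sum_apply]
  conv_lhs => rw [hv]
  simp only [totalCost, map_sum, map_smul, smul_eq_mul, mul_comm]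

variable [Nonempty A]

/-- The optimal cost-to-go `V(t,s) = min_a Q(t,s,a)`. -/
noncomputable def stateValue (P : Fin (T + 1) → S → S → A → ℝ) (c : Fin (T + 1) → S → A → ℝ)
    (t : Fin (T + 1)) (s : S) : ℝ :=
  univ.inf' univ_nonempty (Qval T P c t s)

/-- The advantage `Q(t,s,a) - V(t,s)`: the extra cost of playing `a` at `(t,s)` instead of an
optimal action. Costs are minimized here, so it is nonnegative. -/
noncomputable def advantage (P : Fin (T + 1) → S → S → A → ℝ) (c : Fin (T + 1) → S → A → ℝ)
    (t : Fin (T + 1)) (s : S) (a : A) : ℝ :=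
  Qval T P c t s a - stateValue P c t s

lemma Qval_last (s : S) (a : A) : Qval T P c (Fin.last T) s a = c (Fin.last T) s a := by
  simp [Qval, Qaux]

lemma Qval_castSucc (i : Fin T) (s : S) (a : A) :
    Qval T P c i.castSucc s a =
      c i.castSucc s a + ∑ s', P i.succ s' s a * stateValue P c i.succ s' := by
  obtain ⟨i, hi⟩ := i
  have hstep : T - i = T - (i + 1) + 1 := by omega
  have hnow : T - (T - (i + 1) + 1) = i := by omega
  have hnext : T - (T - (i + 1)) = i + 1 := by omega
  simp only [Qval, stateValue, Fin.castSucc_mk, Fin.succ_mk, hstep, Qaux, hnow, hnext]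

lemma advantage_nonneg (t : Fin (T + 1)) (s : S) (a : A) : 0 ≤ advantage P c t s a :=
  sub_nonneg.2 (inf'_le _ (mem_univ a))

lemma sum_Qval_castSucc_mul (hx : x ∈ Feas T P z0) (i : Fin T) :
    ∑ s, ∑ a, Qval T P c i.castSucc s a * x i.castSucc s a =
      ∑ s, ∑ a, c i.castSucc s a * x i.castSucc s a +
        ∑ s, ∑ a, stateValue P c i.succ s * x i.succ s a := by
  have hpush : ∑ s, ∑ a, (∑ s', P i.succ s' s a * stateValue P c i.succ s') * x i.castSucc s a =
      ∑ s', stateValue P c i.succ s' * ∑ s, ∑ a, P i.succ s' s a * x i.castSucc s a := by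
    simp only [sum_mul, mul_sum]
    rw [sum_comm_cycle]
    exact sum_congr rfl fun s' _ => sum_congr rfl fun s _ => sum_congr rfl fun a _ => by ring
  simp only [Qval_castSucc, add_mul, sum_add_distrib, hpush, (mem_feas_iff.1 hx).2.2, mul_sum]

lemma totalCost_eq_add_totalCost_advantage (hx : x ∈ Feas T P z0) :
    totalCost c x = ∑ s, stateValue P c 0 s * z0 s + totalCost (advantage P c) x := by
  have hinit : ∑ s, stateValue P c 0 s * z0 s = ∑ s, ∑ a, stateValue P c 0 s * x 0 s a := by
    simp only [← mul_sum, (mem_feas_iff.1 hx).2.1]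
  have hQ : ∑ t, ∑ s, ∑ a, Qval T P c t s a * x t s a =
      totalCost c x + ∑ i : Fin T, ∑ s, ∑ a, stateValue P c i.succ s * x i.succ s a := by
    simp only [totalCost, Fin.sum_univ_castSucc (n := T), sum_Qval_castSucc_mul hx, Qval_last,
      sum_add_distrib]
    ring
  have hV : ∑ t, ∑ s, ∑ a, stateValue P c t s * x t s a =
      ∑ s, stateValue P c 0 s * z0 s +
        ∑ i : Fin T, ∑ s, ∑ a, stateValue P c i.succ s * x i.succ s a := by
    rw [hinit, Fin.sum_univ_succ]
  have hadv : totalCost (advantage P c) x =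
      ∑ t, ∑ s, ∑ a, Qval T P c t s a * x t s a -
        ∑ t, ∑ s, ∑ a, stateValue P c t s * x t s a := by
    simp only [totalCost, advantage, sub_mul, sum_sub_distrib]
  linarith

lemma bellmanCond_iff_totalCost_advantage_eq_zero (hx : ∀ t s a, 0 ≤ x t s a) :
    BellmanCond T P c x ↔ totalCost (advantage P c) x = 0 := by
  rw [totalCost_eq_zero_iff advantage_nonneg hx]
  refine forall₃_congr fun t s a => ?_
  rw [mul_eq_zero, advantage, sub_eq_zero, (hx t s a).lt_iff_ne', or_iff_not_imp_right]
  rfl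

lemma bellmanCond_policyOccupation [DecidableEq A] {π : Fin (T + 1) → S → A}
    (hπ : ∀ t s, Qval T P c t s (π t s) = stateValue P c t s) :
    BellmanCond T P c (policyOccupation P z0 π) := by
  intro t s a hpos
  obtain rfl : a = π t s := by
    by_contra hne
    simp [policyOccupation, hne] at hpos
  exact hπ t s

lemma exists_mem_feas_bellmanCond (hP : ∀ t s' s a, 0 ≤ P t s' s a) (hz0 : ∀ s, 0 ≤ z0 s)
    (c : Fin (T + 1) → S → A → ℝ) : ∃ x ∈ Feas T P z0, BellmanCond T P c x := by
  classical
  have hgreedy (t s) : ∃ a, Qval T P c t s a = stateValue P c t s := by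
    obtain ⟨a, -, ha⟩ := exists_mem_eq_inf' univ_nonempty (Qval T P c t s)
    exact ⟨a, ha.symm⟩
  choose π hπ using hgreedy
  exact ⟨policyOccupation P z0 π, policyOccupation_mem_feas hP hz0 π,
    bellmanCond_policyOccupation hπ⟩

lemma bellmanCond_iff_isMinOn_totalCost (hP : ∀ t s' s a, 0 ≤ P t s' s a)
    (hx : x ∈ Feas T P z0) : BellmanCond T P c x ↔ IsMinOn (totalCost c) (Feas T P z0) x := by
  have hle_iff {y} (hy : y ∈ Feas T P z0) : totalCost c x ≤ totalCost c y ↔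
      totalCost (advantage P c) x ≤ totalCost (advantage P c) y := by
    rw [totalCost_eq_add_totalCost_advantage hx, totalCost_eq_add_totalCost_advantage hy,
      add_le_add_iff_left]
  rw [bellmanCond_iff_totalCost_advantage_eq_zero hx.1, isMinOn_iff]
  constructor
  · intro hzero y hy
    exact (hle_iff hy).2 (hzero.trans_le (totalCost_nonneg advantage_nonneg hy.1))
  · intro hmin
    obtain ⟨y, hy, hyB⟩ := exists_mem_feas_bellmanCond hP (nonneg_of_feas_nonempty ⟨x, hx⟩) c
    rw [bellmanCond_iff_totalCost_advantage_eq_zero hy.1] at hyB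
    exact (((hle_iff hy).1 (hmin y hy)).trans_eq hyB).antisymm
      (totalCost_nonneg advantage_nonneg hx.1)

end DynamicProgramming

theorem stmt0_general {S A : Type*} [Fintype S] [Fintype A] [Nonempty A]
    [DecidableEq S] [DecidableEq A] {T : ℕ}
    {P : Fin (T + 1) → S → S → A → ℝ} (hP : ∀ t s' s a, 0 ≤ P t s' s a) {z0 : S → ℝ}
    {F : (Fin (T + 1) → S → A → ℝ) → ℝ} (hF : StrictConvexOn ℝ (Feas T P z0) F)
    {xhat : Fin (T + 1) → S → A → ℝ} (hxhat : xhat ∈ Feas T P z0)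
    {F' : (Fin (T + 1) → S → A → ℝ) →L[ℝ] ℝ} (hF' : HasFDerivWithinAt F F' (Feas T P z0) xhat)
    {c : Fin (T + 1) → S → A → ℝ} (hc : ∀ t s a, F' (eb T t s a) = c t s a) :
    (∀ x ∈ Feas T P z0, x ≠ xhat → F xhat < F x) ↔ BellmanCond T P c xhat := by
  have hF'c : ⇑F' = totalCost c := by
    simpa only [ContinuousLinearMap.coe_coe, hc] using linearMap_eq_totalCost F'.toLinearMap
  rw [forall_lt_iff_isMinOn_of_strictConvexOn hF hxhat,
    isMinOn_iff_isMinOn_fderivWithin_of_convexOn hF.convexOn hF' hxhat, hF'c,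
    bellmanCond_iff_isMinOn_totalCost hP hxhat]

/-- For player i with fixed opponents x⁻ⁱ, an objective Fᵢ that is C² with
positive definite Hessian on an open convex set containing 𝒳(P,z₀), and whose gradient
is the player cost ℓⁱ(·, x⁻ⁱ): x̂ ∈ 𝒳(P,z₀) is the unique minimizer of Fᵢ over 𝒳(P,z₀)
iff x̂ satisfies the Bellman condition for c = ℓⁱ(x̂, x⁻ⁱ). -/
theorem stmt0 {S A : Type*} [Fintype S] [Fintype A] [Nonempty S] [Nonempty A]
    [DecidableEq S] [DecidableEq A] {T : ℕ}
    (P : Fin (T+1) → S → S → A → ℝ) (hP : IsKernel T P)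
    (z0 : S → ℝ) (hz0 : ∀ s, 0 ≤ z0 s)
    {Opp : Type*} (xopp : Opp)
    (ℓ : (Fin (T+1) → S → A → ℝ) → Opp → Fin (T+1) → S → A → ℝ)
    (F : (Fin (T+1) → S → A → ℝ) → ℝ)
    (U : Set (Fin (T+1) → S → A → ℝ)) (hUopen : IsOpen U) (hUconv : Convex ℝ U)
    (hXU : Feas T P z0 ⊆ U)
    (hC2 : ContDiffOn ℝ 2 F U)
    (hgrad : ∀ x ∈ U, ∀ t s a, fderiv ℝ F x (eb T t s a) = ℓ x xopp t s a)
    (hhess : ∀ x ∈ U, ∀ v : Fin (T+1) → S → A → ℝ, v ≠ 0 →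
      0 < fderiv ℝ (fderiv ℝ F) x v v)
    (xhat : Fin (T+1) → S → A → ℝ) (hxhat : xhat ∈ Feas T P z0) :
    (∀ x ∈ Feas T P z0, x ≠ xhat → F xhat < F x) ↔
      BellmanCond T P (ℓ xhat xopp) xhat := by
  have hF := (strictConvexOn_of_fderiv_fderiv_pos hUopen hUconv hC2 hhess).subset hXU convex_feas
  have hF' := (hC2.differentiableOn two_ne_zero).hasFDerivAt (hUopen.mem_nhds (hXU hxhat))
  exact stmt0_general hP.1 hF hxhat hF'.hasFDerivWithinAt (hgrad xhat (hXU hxhat))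
end

section
/- Let c : {0,...,T} × S × A → ℝ be costs and x̂ ∈ 𝒳(P, z₀). Suppose there exist multipliers ν : {0,...,T} × S → ℝ and μ : {0,...,T} × S × A → ℝ with μ ≥ 0, μ(t,s,a) · x̂(t,s,a) = 0 for all t,s,a, and satisfying the stationarity equations c(t,s,a) + ∑_{s'} P(t+1,s',s,a) ν(t+1,s') = ν(t,s) + μ(t,s,a) for all t < T and c(T,s,a) = ν(T,s) + μ(T,s,a). Then x̂ satisfies the Bellman condition for c: for all t,s,a, x̂(t,s,a) > 0 implies Q(t,s,a) = min_{a'} Q(t,s,a'), where Q are the Q-values of c with kernel P. -/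
open Finset

/-! The multiplier `μ` is the slack in the dual constraints `ν ≤ c + P ν` of the linear program
whose feasible set is `Feas T P z0`. By backward induction any such `ν` is a lower bound for the
minimal Q-values, and the bound is attained at every pair `(s, a)` charged by `x`: there the slack
vanishes, and each successor state of positive probability is itself charged by `x` at the next
time, so the bound is already known to be attained at that state. -/

/-- The support of `x` is closed under `P`: a state reached with positive probability from a
state-action pair charged by `x` is charged by `x` at the next time, through some action. This
is what the flow equations of `Feas` say about supports. -/
def SupportClosed {S A : Type*} {T : ℕ} (P : Fin (T + 1) → S → S → A → ℝ)
    (x : Fin (T + 1) → S → A → ℝ) : Prop :=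
  ∀ (t : Fin T) (s' s : S) (a : A), 0 < x t.castSucc s a → 0 < P t.succ s' s a →
    ∃ a', 0 < x t.succ s' a'

section

variable {S A : Type*} [Fintype S] {T : ℕ}
  {P : Fin (T + 1) → S → S → A → ℝ} {c : Fin (T + 1) → S → A → ℝ}
  {ν : Fin (T + 1) → S → ℝ} {x : Fin (T + 1) → S → A → ℝ}

/-- The Bellman backup of `ν`: the cost of playing `a` in state `s` at time `t` when the states at
time `t + 1` are valued by `ν`. Nothing follows the horizon `T`, so the backup there is the cost
alone. -/
noncomputable def bellmanBackup (P : Fin (T + 1) → S → S → A → ℝ) (c : Fin (T + 1) → S → A → ℝ)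
    (ν : Fin (T + 1) → S → ℝ) (t : Fin (T + 1)) (s : S) (a : A) : ℝ :=
  c t s a + Fin.lastCases 0 (fun i : Fin T => ∑ s', P i.succ s' s a * ν i.succ s') t

theorem bellmanBackup_last (s : S) (a : A) :
    bellmanBackup P c ν (Fin.last T) s a = c (Fin.last T) s a := by
  simp only [bellmanBackup, Fin.lastCases_last, add_zero]

theorem bellmanBackup_castSucc (t : Fin T) (s : S) (a : A) :
    bellmanBackup P c ν t.castSucc s a =
      c t.castSucc s a + ∑ s', P t.succ s' s a * ν t.succ s' := by
  simp only [bellmanBackup, Fin.lastCases_castSucc]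

theorem supportClosed_of_mem_feas [Fintype A] {z0 : S → ℝ}
    (hP : ∀ t s' s a, 0 ≤ P t s' s a) (hx : x ∈ Feas T P z0) : SupportClosed P x := by
  obtain ⟨hx_nonneg, -, hflow⟩ := hx
  intro t s' s a hxa hPa
  have hterm : ∀ u b, 0 ≤ P t.succ s' u b * x t.castSucc u b := fun u b =>
    mul_nonneg (hP _ _ _ _) (hx_nonneg _ _ _)
  have hmass : 0 < ∑ a', x t.succ s' a' :=
    calc 0 < P t.succ s' s a * x t.castSucc s a := mul_pos hPa hxa
      _ ≤ ∑ b, P t.succ s' s b * x t.castSucc s b :=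
        single_le_sum (fun b _ => hterm s b) (mem_univ a)
      _ ≤ ∑ u, ∑ b, P t.succ s' u b * x t.castSucc u b :=
        single_le_sum (f := fun u => ∑ b, P t.succ s' u b * x t.castSucc u b)
          (fun u _ => sum_nonneg fun b _ => hterm u b) (mem_univ s)
      _ = ∑ a', x t.succ s' a' := hflow t t.2 s'
  by_contra! hzero
  exact hmass.not_ge (sum_nonpos fun a' _ => hzero a')

variable [Fintype A] [Nonempty A]

/-- The optimal cost-to-go `V(t,s) = min_a Q(t,s,a)`. -/
noncomputable def minQ (P : Fin (T + 1) → S → S → A → ℝ) (c : Fin (T + 1) → S → A → ℝ)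
    (t : Fin (T + 1)) (s : S) : ℝ :=
  univ.inf' univ_nonempty (Qval T P c t s)

theorem minQ_le_Qval (t : Fin (T + 1)) (s : S) (a : A) : minQ P c t s ≤ Qval T P c t s a :=
  inf'_le _ (mem_univ a)

theorem Qval_eq_bellmanBackup_minQ : Qval T P c = bellmanBackup P c (minQ P c) := by
  funext t s a
  induction t using Fin.lastCases with
  | last => simp only [bellmanBackup_last, Qval, Fin.val_last, Nat.sub_self, Qaux]
  | cast t =>
    -- `Qaux` counts backwards from the horizon: time `t` is index `k + 1` for this `k`.
    obtain ⟨k, hk⟩ : ∃ k, t.val + (k + 1) = T := ⟨T - (t + 1), by omega⟩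
    have htime : T - t.castSucc.val = k + 1 := by simp only [Fin.val_castSucc]; omega
    have hnext : T - t.succ.val = k := by simp only [Fin.val_succ]; omega
    have hcast : (⟨T - (k + 1), by omega⟩ : Fin (T + 1)) = t.castSucc :=
      Fin.ext (by simp only [Fin.val_castSucc]; omega)
    have hsucc : (⟨T - k, by omega⟩ : Fin (T + 1)) = t.succ :=
      Fin.ext (by simp only [Fin.val_succ]; omega)
    simp only [bellmanBackup_castSucc, minQ, Qval, htime, hnext, Qaux, hcast, hsucc]

theorem le_minQ_of_le_bellmanBackup (hP : ∀ t s' s a, 0 ≤ P t s' s a)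
    (hν : ∀ t s a, ν t s ≤ bellmanBackup P c ν t s a) (t : Fin (T + 1)) (s : S) :
    ν t s ≤ minQ P c t s := by
  have of_backup_le : ∀ {t s}, (∀ a, bellmanBackup P c ν t s a ≤
      bellmanBackup P c (minQ P c) t s a) → ν t s ≤ minQ P c t s := fun {t s} h =>
    le_inf' _ _ fun a _ => by
      rw [Qval_eq_bellmanBackup_minQ]
      exact (hν t s a).trans (h a)
  induction t using Fin.reverseInduction generalizing s with
  | last => exact of_backup_le fun a => by simp only [bellmanBackup_last, le_refl]
  | cast t ih =>
    refine of_backup_le fun a => ?_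
    simp only [bellmanBackup_castSucc]
    gcongr with s'
    exacts [hP _ _ _ _, ih s']

theorem Qval_eq_of_pos (hP : ∀ t s' s a, 0 ≤ P t s' s a) (hx : SupportClosed P x)
    (hν : ∀ t s a, ν t s ≤ bellmanBackup P c ν t s a)
    (htight : ∀ t s a, 0 < x t s a → bellmanBackup P c ν t s a = ν t s)
    {t : Fin (T + 1)} {s : S} {a : A} (hxa : 0 < x t s a) :
    Qval T P c t s a = ν t s := by
  rw [← htight t s a hxa, Qval_eq_bellmanBackup_minQ]
  induction t using Fin.reverseInduction generalizing s a with
  | last => simp only [bellmanBackup_last]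
  | cast t ih =>
    have hnext : ∀ s', 0 < P t.succ s' s a → minQ P c t.succ s' = ν t.succ s' := by
      intro s' hPa
      obtain ⟨a', hxa'⟩ := hx t s' s a hxa hPa
      refine le_antisymm ?_ (le_minQ_of_le_bellmanBackup hP hν _ _)
      calc minQ P c t.succ s' ≤ Qval T P c t.succ s' a' := minQ_le_Qval _ _ _
        _ = bellmanBackup P c ν t.succ s' a' := by rw [Qval_eq_bellmanBackup_minQ, ih hxa']
        _ = ν t.succ s' := htight _ _ _ hxa'
    simp only [bellmanBackup_castSucc]
    congr 1
    refine sum_congr rfl fun s' _ => ?_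
    rcases (hP t.succ s' s a).eq_or_lt with hzero | hpos
    · simp only [← hzero, zero_mul]
    · rw [hnext s' hpos]

theorem bellmanCond_of_le_bellmanBackup (hP : ∀ t s' s a, 0 ≤ P t s' s a)
    (hx : SupportClosed P x) (hν : ∀ t s a, ν t s ≤ bellmanBackup P c ν t s a)
    (htight : ∀ t s a, 0 < x t s a → bellmanBackup P c ν t s a = ν t s) :
    BellmanCond T P c x := fun t s a hxa =>
  le_antisymm
    ((Qval_eq_of_pos hP hx hν htight hxa).trans_le (le_minQ_of_le_bellmanBackup hP hν t s))
    (minQ_le_Qval t s a)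

theorem stmt3_general (hP : ∀ t s' s a, 0 ≤ P t s' s a) (hx : SupportClosed P x)
    {μ : Fin (T + 1) → S → A → ℝ} (hμ_nonneg : ∀ t s a, 0 ≤ μ t s a)
    (hcs : ∀ t s a, μ t s a * x t s a = 0)
    (hstat : ∀ (t : Fin T) (s : S) (a : A),
      c t.castSucc s a + ∑ s', P t.succ s' s a * ν t.succ s' = ν t.castSucc s + μ t.castSucc s a)
    (hstat_last : ∀ s a, c (Fin.last T) s a = ν (Fin.last T) s + μ (Fin.last T) s a) :
    BellmanCond T P c x := by
  have hbackup : ∀ t s a, bellmanBackup P c ν t s a = ν t s + μ t s a := by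
    refine Fin.lastCases ?_ fun t => ?_
    · simpa only [bellmanBackup_last] using hstat_last
    · simpa only [bellmanBackup_castSucc] using hstat t
  refine bellmanCond_of_le_bellmanBackup hP hx (ν := ν) (fun t s a => ?_) fun t s a hxa => ?_
  · rw [hbackup]
    exact le_add_of_nonneg_right (hμ_nonneg t s a)
  · rw [hbackup, (mul_eq_zero.mp (hcs t s a)).resolve_right hxa.ne', add_zero]

end

/-- If x̂ ∈ 𝒳(P,z₀) admits KKT multipliers ν, μ with μ ≥ 0, complementary
slackness, and the stationarity equations for costs c, then x̂ satisfies the Bellman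
condition for c. -/
theorem stmt3 {S A : Type*} [Fintype S] [Fintype A] [Nonempty S] [Nonempty A] {T : ℕ}
    (P : Fin (T+1) → S → S → A → ℝ) (hP : IsKernel T P)
    (z0 : S → ℝ) (hz0 : ∀ s, 0 ≤ z0 s)
    (c : Fin (T+1) → S → A → ℝ)
    (xhat : Fin (T+1) → S → A → ℝ) (hxhat : xhat ∈ Feas T P z0)
    (ν : Fin (T+1) → S → ℝ) (μ : Fin (T+1) → S → A → ℝ)
    (hμnonneg : ∀ t s a, 0 ≤ μ t s a)
    (hcs : ∀ t s a, μ t s a * xhat t s a = 0)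
    (hstat : ∀ (t : ℕ) (ht : t < T), ∀ s a,
      c ⟨t, by omega⟩ s a + ∑ s', P ⟨t+1, by omega⟩ s' s a * ν ⟨t+1, by omega⟩ s'
        = ν ⟨t, by omega⟩ s + μ ⟨t, by omega⟩ s a)
    (hstatT : ∀ s a, c (Fin.last T) s a = ν (Fin.last T) s + μ (Fin.last T) s a) :
    BellmanCond T P c xhat :=
  stmt3_general hP.1 (supportClosed_of_mem_feas hP.1 hxhat) hμnonneg hcs
    (fun t => hstat t t.2) hstatT
end

section
/- Let C₁ ⊆ ℝ^{n₁}, ..., C_N ⊆ ℝ^{n_N} be convex sets, C = C₁ × ⋯ × C_N, and let F : ℝ^{n₁ + ⋯ + n_N} → ℝ be convex and differentiable. Suppose x̂ = (x̂^1,...,x̂^N) ∈ C is coordinatewise (blockwise) optimal: for every i and every y ∈ C_i, F(x̂^1,...,x̂^{i-1}, y, x̂^{i+1},...,x̂^N) ≥ F(x̂). Then x̂ is a global minimizer of F over C: F(x) ≥ F(x̂) for all x ∈ C. -/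
/-!
Minimality in a single block makes the directional derivative nonnegative along every feasible
displacement of that block. Linearity of the derivative sums these inequalities over the blocks, so
`F' (x - a) ≥ 0` for every feasible `x`, and the gradient inequality `F' (x - a) ≤ F x - F a` turns
this first-order condition at `a` into global minimality.
-/

open Set

section FirstOrderConditions

variable {E : Type*} [NormedAddCommGroup E] [NormedSpace ℝ E]
  {f : E → ℝ} {f' : E →L[ℝ] ℝ} {s : Set E} {a x : E}

theorem hasFDerivWithinAt_apply_sub_nonneg_of_isLocalMinOn (hmin : IsLocalMinOn f s a)
    (hs : StarConvex ℝ a s) (hf : HasFDerivWithinAt f f' s a) (hx : x ∈ s) : 0 ≤ f' (x - a) :=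
  hmin.hasFDerivWithinAt_nonneg hf <|
    sub_mem_posTangentConeAt_of_segment_subset (hs.segment_subset hx)

theorem hasFDerivWithinAt_apply_sub_le_of_convexOn (hconv : ConvexOn ℝ s f)
    (hf : HasFDerivWithinAt f f' s a) (ha : a ∈ s) (hx : x ∈ s) : f' (x - a) ≤ f x - f a := by
  let ℓ : ℝ →ᵃ[ℝ] E := AffineMap.lineMap a x
  have hℓ₀ : ℓ 0 = a := AffineMap.lineMap_apply_zero a x
  have hℓ₁ : ℓ 1 = x := AffineMap.lineMap_apply_one a x
  have hconv_line : ConvexOn ℝ (ℓ ⁻¹' s) (f ∘ ℓ) := hconv.comp_affineMap ℓ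
  have hderiv_line : HasDerivWithinAt (f ∘ ℓ) (f' (x - a)) (ℓ ⁻¹' s) 0 :=
    (hℓ₀.symm ▸ hf).comp_hasDerivWithinAt 0 AffineMap.hasDerivWithinAt_lineMap (mapsTo_preimage ℓ s)
  simpa [slope_def_field, hℓ₀, hℓ₁] using
    hconv_line.le_slope_of_hasDerivWithinAt (mem_preimage.2 (hℓ₀.symm ▸ ha))
      (mem_preimage.2 (hℓ₁.symm ▸ hx)) one_pos hderiv_line

theorem isMinOn_of_convexOn_of_hasFDerivWithinAt_nonneg (hconv : ConvexOn ℝ s f)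
    (hf : HasFDerivWithinAt f f' s a) (ha : a ∈ s) (hnonneg : ∀ x ∈ s, 0 ≤ f' (x - a)) :
    IsMinOn f s a := fun x hx =>
  sub_nonneg.1 <| (hnonneg x hx).trans <| hasFDerivWithinAt_apply_sub_le_of_convexOn hconv hf ha hx

end FirstOrderConditions

section Blocks

variable {ι : Type*} {E : ι → Type*} {C : ∀ i, Set (E i)} {a : ∀ i, E i}

theorem convex_of_convex_univ_pi {𝕜 : Type*} [Semiring 𝕜] [PartialOrder 𝕜]
    [∀ i, AddCommMonoid (E i)] [∀ i, Module 𝕜 (E i)] (hC : Convex 𝕜 (univ.pi C))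
    (hne : (univ.pi C).Nonempty) (i : ι) : Convex 𝕜 (C i) :=
  eval_image_univ_pi hne ▸ hC.linear_image (LinearMap.proj i)

variable [Finite ι] [DecidableEq ι] [∀ i, NormedAddCommGroup (E i)] [∀ i, NormedSpace ℝ (E i)]
  {F : (∀ i, E i) → ℝ} {F' : (∀ i, E i) →L[ℝ] ℝ}

theorem hasFDerivWithinAt_comp_update (hF : HasFDerivWithinAt F F' (univ.pi C) a)
    (ha : a ∈ univ.pi C) (i : ι) :
    HasFDerivWithinAt (fun y => F (Function.update a i y)) (F' ∘L .single ℝ E i) (C i) (a i) := by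
  have := Fintype.ofFinite ι
  have hmaps : MapsTo (Function.update a i) (C i) (univ.pi C) := fun _ hy =>
    (update_mem_pi_iff_of_mem ha).2 fun _ => hy
  have hupdate : HasFDerivAt (Function.update a i) (.single ℝ E i) (a i) := by
    convert hasFDerivAt_update a (a i) using 1
    ext y j
    rcases eq_or_ne j i with rfl | hj <;> simp [*]
  have hF_update : HasFDerivWithinAt F F' (univ.pi C) (Function.update a i (a i)) := by
    rwa [Function.update_eq_self]
  exact hF_update.comp (a i) hupdate.hasFDerivWithinAt hmaps

theorem stmt6_general (hconv : ConvexOn ℝ (univ.pi C) F)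
    (hdiff : DifferentiableWithinAt ℝ F (univ.pi C) a) (ha : a ∈ univ.pi C)
    (hblock : ∀ i, IsLocalMinOn (fun y => F (Function.update a i y)) (C i) (a i)) :
    IsMinOn F (univ.pi C) a := by
  have := Fintype.ofFinite ι
  obtain ⟨F', hF⟩ := hdiff
  have hsingle_nonneg (x) (hx : x ∈ univ.pi C) (i : ι) : 0 ≤ (F' ∘L .single ℝ E i) (x i - a i) := by
    have hCi : Convex ℝ (C i) := convex_of_convex_univ_pi hconv.1 ⟨a, ha⟩ i
    exact hasFDerivWithinAt_apply_sub_nonneg_of_isLocalMinOn (hblock i) (hCi (ha i trivial))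
      (hasFDerivWithinAt_comp_update hF ha i) (hx i trivial)
  refine isMinOn_of_convexOn_of_hasFDerivWithinAt_nonneg hconv hF ha fun x hx => ?_
  calc
    0 ≤ ∑ i, (F' ∘L .single ℝ E i) (x i - a i) := Finset.sum_nonneg fun i _ => hsingle_nonneg x hx i
    _ = F' (x - a) := F'.sum_comp_single ℝ E (x - a)

end Blocks

/-- For convex sets C₁,…,C_N and a convex differentiable F on the product
space, blockwise (coordinatewise) optimality of x̂ over the Cᵢ implies that x̂ is a
global minimizer of F over C₁ × ⋯ × C_N. -/
theorem stmt6 {N : ℕ} (n : Fin N → ℕ)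
    (C : ∀ i, Set (Fin (n i) → ℝ)) (hC : ∀ i, Convex ℝ (C i))
    (F : (∀ i, Fin (n i) → ℝ) → ℝ)
    (hFconv : ConvexOn ℝ Set.univ F) (hFdiff : Differentiable ℝ F)
    (xhat : ∀ i, Fin (n i) → ℝ) (hxhat : ∀ i, xhat i ∈ C i)
    (hblock : ∀ i, ∀ y ∈ C i, F xhat ≤ F (Function.update xhat i y)) :
    ∀ x : ∀ i, Fin (n i) → ℝ, (∀ i, x i ∈ C i) → F xhat ≤ F x := by
  have hmin : IsMinOn F (univ.pi C) xhat :=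
    stmt6_general (hFconv.subset (subset_univ _) (convex_pi fun i _ => hC i))
      (hFdiff xhat).differentiableWithinAt (fun i _ => hxhat i)
      fun i => IsMinOn.localize fun y hy => by simpa using hblock i y hy
  exact fun x hx => hmin fun i _ => hx i
end

section
/- Let the player costs have the congestion form ℓ^i(t,s,a)(x) = α_i · f_{t,s}(∑_{a'} y(t,s,a')) + α_i · g_{t,s,a}(y(t,s,a)) + h^i_{t,s,a}(x^i(t,s,a)), where y = ∑_{j=1}^N α_j x^j with α_j > 0 for all j, and where each f_{t,s} : ℝ → ℝ and g_{t,s,a} : ℝ → ℝ is differentiable with everywhere nonnegative derivative and each h^i_{t,s,a} : ℝ → ℝ is differentiable with everywhere strictly positive derivative. Then at every point x ∈ ℝ^{N(T+1)|S||A|}, the Jacobian Dξ(x) of the stacked cost vector ξ is symmetric and positive definite: vᵀ Dξ(x) v > 0 for every nonzero v. -/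
open Finset

/-! Pairing the cost vector with a direction `w` moves the impact factors onto `w`:
`⟨w, ξ(x)⟩ = ∑ f(Y x) · Y w + ∑ g(y x) · y w + ∑ h(x) · w`, where `y` is the congestion and `Y` its
sum over actions. The Jacobian of `ξ` at `x` is again a congestion cost, with `f`, `g`, `h` replaced
by multiplication by their derivatives. The identity above therefore writes the Jacobian form as
`∑ f' · Y v · Y w + ∑ g' · y v · y w + ∑ h' · v · w`, which is visibly symmetric and, at `w = v`,
a sum of squares whose last part is definite. -/

section Algebra

variable {R ι τ S A : Type*} [CommSemiring R] [Fintype ι]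

/-- The congestion distribution `y = ∑ⱼ αⱼ xʲ` of a joint distribution `x`. -/
def congestion (α : ι → R) (x : ι → τ → S → A → R) (t : τ) (s : S) (a : A) : R :=
  ∑ j, α j * x j t s a

/-- The congestion distribution summed over actions: the total congestion of each state. -/
def stateCongestion [Fintype A] (α : ι → R) (x : ι → τ → S → A → R) (t : τ) (s : S) : R :=
  ∑ a, congestion α x t s a

/-- The stacked cost vector `ξ` of a game with congestion-form player costs. -/
def congestionCost [Fintype A] (α : ι → R) (f : τ → S → R → R) (g : τ → S → A → R → R)
    (h : ι → τ → S → A → R → R) (x : ι → τ → S → A → R) (i : ι) (t : τ) (s : S) (a : A) : R :=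
  α i * f t s (stateCongestion α x t s) + α i * g t s a (congestion α x t s a)
    + h i t s a (x i t s a)

/-- The congestion cost in which `f`, `g`, `h` are multiplications by the slopes `f'`, `g'`, `h'`.
This is the form taken by the Jacobian of any congestion cost. -/
def linearCongestionCost [Fintype A] (α : ι → R) (f' : τ → S → R) (g' : τ → S → A → R)
    (h' : ι → τ → S → A → R) : (ι → τ → S → A → R) → ι → τ → S → A → R :=
  congestionCost α (fun t s => (f' t s * ·)) (fun t s a => (g' t s a * ·))
    (fun i t s a => (h' i t s a * ·))

variable [Fintype τ] [Fintype S] [Fintype A]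

/-- The standard bilinear pairing `wᵀ u` on the joint space, with vectors kept in curried form. -/
def jointPairing (w u : ι → τ → S → A → R) : R :=
  ∑ i, ∑ t, ∑ s, ∑ a, w i t s a * u i t s a

theorem jointPairing_add_right (w u u' : ι → τ → S → A → R) :
    jointPairing w (u + u') = jointPairing w u + jointPairing w u' := by
  simp only [jointPairing, Pi.add_apply, mul_add, sum_add_distrib]

theorem jointPairing_impact_mul (α : ι → R) (w : ι → τ → S → A → R) (u : τ → S → A → R) :
    jointPairing w (fun i t s a => α i * u t s a) =
      ∑ t, ∑ s, ∑ a, u t s a * congestion α w t s a := by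
  simp only [jointPairing, congestion, mul_sum]
  rw [sum_comm]
  refine sum_congr rfl fun t _ => ?_
  rw [sum_comm]
  refine sum_congr rfl fun s _ => ?_
  rw [sum_comm]
  refine sum_congr rfl fun a _ => sum_congr rfl fun i _ => ?_
  ring

theorem jointPairing_congestionCost (α : ι → R) (f : τ → S → R → R) (g : τ → S → A → R → R)
    (h : ι → τ → S → A → R → R) (w x : ι → τ → S → A → R) :
    jointPairing w (congestionCost α f g h x) =
      ∑ t, ∑ s, f t s (stateCongestion α x t s) * stateCongestion α w t s
        + ∑ t, ∑ s, ∑ a, g t s a (congestion α x t s a) * congestion α w t s a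
        + ∑ i, ∑ t, ∑ s, ∑ a, h i t s a (x i t s a) * w i t s a := by
  have split_cost : congestionCost α f g h x =
      (fun i t s _ => α i * f t s (stateCongestion α x t s))
        + (fun i t s a => α i * g t s a (congestion α x t s a))
        + fun i t s a => h i t s a (x i t s a) := rfl
  rw [split_cost, jointPairing_add_right, jointPairing_add_right,
    jointPairing_impact_mul α w fun t s _ => f t s (stateCongestion α x t s),
    jointPairing_impact_mul]
  simp only [jointPairing, ← mul_sum, stateCongestion, mul_comm (w _ _ _ _)]

theorem jointPairing_linearCongestionCost (α : ι → R) (f' : τ → S → R) (g' : τ → S → A → R)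
    (h' v w : ι → τ → S → A → R) :
    jointPairing w (linearCongestionCost α f' g' h' v) =
      ∑ t, ∑ s, f' t s * stateCongestion α v t s * stateCongestion α w t s
        + ∑ t, ∑ s, ∑ a, g' t s a * congestion α v t s a * congestion α w t s a
        + ∑ i, ∑ t, ∑ s, ∑ a, h' i t s a * v i t s a * w i t s a :=
  jointPairing_congestionCost ..

theorem jointPairing_linearCongestionCost_comm (α : ι → R) (f' : τ → S → R) (g' : τ → S → A → R)
    (h' v w : ι → τ → S → A → R) :
    jointPairing w (linearCongestionCost α f' g' h' v) =
      jointPairing v (linearCongestionCost α f' g' h' w) := by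
  rw [jointPairing_linearCongestionCost, jointPairing_linearCongestionCost]
  simp only [mul_right_comm]

end Algebra

section Positivity

variable {R ι τ S A : Type*} [CommRing R] [LinearOrder R] [IsStrictOrderedRing R]
  [Fintype ι] [Fintype τ] [Fintype S] [Fintype A]

theorem mul_mul_self_nonneg {c : R} (hc : 0 ≤ c) (v : R) : 0 ≤ c * v * v := by
  rw [mul_assoc]
  exact mul_nonneg hc (mul_self_nonneg v)

theorem sum_mul_mul_self_pos {c v : ι → τ → S → A → R} (hc : ∀ i t s a, 0 < c i t s a)
    (hv : v ≠ 0) : 0 < ∑ i, ∑ t, ∑ s, ∑ a, c i t s a * v i t s a * v i t s a := by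
  obtain ⟨i, t, s, a, hne⟩ : ∃ i t s a, v i t s a ≠ 0 := by
    simpa only [ne_eq, funext_iff, Pi.zero_apply, not_forall] using hv
  have hpos : 0 < c i t s a * v i t s a * v i t s a := by
    rw [mul_assoc]
    exact mul_pos (hc i t s a) (mul_self_pos.2 hne)
  simp only [← Fintype.sum_prod_type']
  exact sum_pos' (fun _ _ => mul_mul_self_nonneg (hc ..).le _) ⟨(i, t, s, a), mem_univ _, hpos⟩

theorem jointPairing_linearCongestionCost_self_pos (α : ι → R) {f' : τ → S → R}
    {g' : τ → S → A → R} {h' v : ι → τ → S → A → R} (hf' : ∀ t s, 0 ≤ f' t s)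
    (hg' : ∀ t s a, 0 ≤ g' t s a) (hh' : ∀ i t s a, 0 < h' i t s a) (hv : v ≠ 0) :
    0 < jointPairing v (linearCongestionCost α f' g' h' v) := by
  rw [jointPairing_linearCongestionCost]
  refine add_pos_of_nonneg_of_pos (add_nonneg ?_ ?_) (sum_mul_mul_self_pos hh' hv)
  · exact sum_nonneg fun t _ => sum_nonneg fun s _ => mul_mul_self_nonneg (hf' t s) _
  · exact sum_nonneg fun t _ => sum_nonneg fun s _ => sum_nonneg fun a _ =>
      mul_mul_self_nonneg (hg' t s a) _

end Positivity

section Derivative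

variable {𝕜 ι τ S A : Type*} [NontriviallyNormedField 𝕜]

/-- Evaluation of a joint vector at the coordinate `(i, t, s, a)`, as a continuous linear map. -/
def jointEval (i : ι) (t : τ) (s : S) (a : A) : (ι → τ → S → A → 𝕜) →L[𝕜] 𝕜 :=
  .proj a ∘L .proj s ∘L .proj t ∘L .proj i

variable [Fintype ι]

theorem hasFDerivAt_congestion (α : ι → 𝕜) (x : ι → τ → S → A → 𝕜) (t : τ) (s : S) (a : A) :
    HasFDerivAt (congestion α · t s a) (∑ j, α j • jointEval j t s a) x := by
  have congestion_eq : (congestion α · t s a) =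
      (∑ j, α j • jointEval j t s a : (ι → τ → S → A → 𝕜) →L[𝕜] 𝕜) := by
    ext y
    simp [congestion, jointEval]
  rw [congestion_eq]
  exact ContinuousLinearMap.hasFDerivAt _

variable [Fintype A]

theorem hasFDerivAt_stateCongestion (α : ι → 𝕜) (x : ι → τ → S → A → 𝕜) (t : τ) (s : S) :
    HasFDerivAt (stateCongestion α · t s) (∑ a, ∑ j, α j • jointEval j t s a) x := by
  have stateCongestion_eq : (stateCongestion α · t s) =
      (∑ a, ∑ j, α j • jointEval j t s a : (ι → τ → S → A → 𝕜) →L[𝕜] 𝕜) := by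
    ext y
    simp [stateCongestion, congestion, jointEval]
  rw [stateCongestion_eq]
  exact ContinuousLinearMap.hasFDerivAt _

variable [Fintype τ] [Fintype S]

theorem fderiv_congestionCost_apply (α : ι → 𝕜) {f : τ → S → 𝕜 → 𝕜} {g : τ → S → A → 𝕜 → 𝕜}
    {h : ι → τ → S → A → 𝕜 → 𝕜} {f' : τ → S → 𝕜} {g' : τ → S → A → 𝕜} {h' : ι → τ → S → A → 𝕜}
    {x : ι → τ → S → A → 𝕜}
    (hf : ∀ t s, HasDerivAt (f t s) (f' t s) (stateCongestion α x t s))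
    (hg : ∀ t s a, HasDerivAt (g t s a) (g' t s a) (congestion α x t s a))
    (hh : ∀ i t s a, HasDerivAt (h i t s a) (h' i t s a) (x i t s a))
    (v : ι → τ → S → A → 𝕜) :
    fderiv 𝕜 (congestionCost α f g h) x v = linearCongestionCost α f' g' h' v := by
  have hcoord (i t s a) := ((((hf t s).comp_hasFDerivAt x
      (hasFDerivAt_stateCongestion α x t s)).const_mul (α i)).add
    (((hg t s a).comp_hasFDerivAt x (hasFDerivAt_congestion α x t s a)).const_mul (α i))).add
    ((hh i t s a).comp_hasFDerivAt x (jointEval i t s a).hasFDerivAt)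
  have hcost : HasFDerivAt (congestionCost α f g h) _ x :=
    hasFDerivAt_pi.2 fun i => hasFDerivAt_pi.2 fun t => hasFDerivAt_pi.2 fun s =>
      hasFDerivAt_pi.2 fun a => hcoord i t s a
  rw [hcost.fderiv]
  ext i t s a
  simp [linearCongestionCost, congestionCost, stateCongestion, congestion, jointEval]

end Derivative

theorem jointPairing_ebN {S A : Type*} [Fintype S] [Fintype A] [DecidableEq S] [DecidableEq A]
    {T N : ℕ} (i : Fin N) (t : Fin (T + 1)) (s : S) (a : A) (u : Fin N → Fin (T + 1) → S → A → ℝ) :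
    jointPairing (ebN N T i t s a) u = u i t s a := by
  simp [jointPairing, ebN, eb, ite_apply, ite_and]

theorem apply_ebN_comm {S A : Type*} [Fintype S] [Fintype A] [DecidableEq S] [DecidableEq A]
    {T N : ℕ} {D : (Fin N → Fin (T + 1) → S → A → ℝ) → Fin N → Fin (T + 1) → S → A → ℝ}
    (hD : ∀ v w, jointPairing w (D v) = jointPairing v (D w))
    (i : Fin N) (t : Fin (T + 1)) (s : S) (a : A)
    (j : Fin N) (t' : Fin (T + 1)) (s' : S) (a' : A) :
    D (ebN N T j t' s' a') i t s a = D (ebN N T i t s a) j t' s' a' := by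
  simpa only [jointPairing_ebN] using hD (ebN N T j t' s' a') (ebN N T i t s a)

theorem stmt8_general {ι τ S A : Type*} [Fintype ι] [Fintype τ] [Fintype S] [Fintype A]
    (α : ι → ℝ) {f : τ → S → ℝ → ℝ} {g : τ → S → A → ℝ → ℝ} {h : ι → τ → S → A → ℝ → ℝ}
    {f' : τ → S → ℝ} {g' : τ → S → A → ℝ} {h' : ι → τ → S → A → ℝ} {x : ι → τ → S → A → ℝ}
    (hf : ∀ t s, HasDerivAt (f t s) (f' t s) (stateCongestion α x t s))
    (hg : ∀ t s a, HasDerivAt (g t s a) (g' t s a) (congestion α x t s a))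
    (hh : ∀ i t s a, HasDerivAt (h i t s a) (h' i t s a) (x i t s a))
    (hf' : ∀ t s, 0 ≤ f' t s) (hg' : ∀ t s a, 0 ≤ g' t s a) (hh' : ∀ i t s a, 0 < h' i t s a) :
    (∀ v w, jointPairing w (fderiv ℝ (congestionCost α f g h) x v) =
      jointPairing v (fderiv ℝ (congestionCost α f g h) x w)) ∧
    ∀ v, v ≠ 0 → 0 < jointPairing v (fderiv ℝ (congestionCost α f g h) x v) := by
  simp only [fderiv_congestionCost_apply α hf hg hh]
  exact ⟨jointPairing_linearCongestionCost_comm α f' g' h',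
    fun _ => jointPairing_linearCongestionCost_self_pos α hf' hg' hh'⟩

/-- For congestion-form player costs
ℓⁱ(t,s,a)(x) = αᵢ f_{t,s}(∑_{a'} y(t,s,a')) + αᵢ g_{t,s,a}(y(t,s,a)) + hⁱ_{t,s,a}(xⁱ(t,s,a))
with y = ∑ⱼ αⱼ xʲ, αⱼ > 0, f and g differentiable with nonnegative derivative, and h
differentiable with strictly positive derivative, the Jacobian of the stacked cost vector
ξ is symmetric and positive definite at every point. -/
theorem stmt8 {S A : Type*} [Fintype S] [Fintype A] [Nonempty S] [Nonempty A]
    [DecidableEq S] [DecidableEq A] {T N : ℕ}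
    (α : Fin N → ℝ) (hα : ∀ j, 0 < α j)
    (f : Fin (T+1) → S → ℝ → ℝ) (g : Fin (T+1) → S → A → ℝ → ℝ)
    (h : Fin N → Fin (T+1) → S → A → ℝ → ℝ)
    (hf : ∀ t s, Differentiable ℝ (f t s)) (hf' : ∀ t s u, 0 ≤ deriv (f t s) u)
    (hg : ∀ t s a, Differentiable ℝ (g t s a)) (hg' : ∀ t s a u, 0 ≤ deriv (g t s a) u)
    (hh : ∀ i t s a, Differentiable ℝ (h i t s a)) (hh' : ∀ i t s a u, 0 < deriv (h i t s a) u)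
    (ξ : (Fin N → Fin (T+1) → S → A → ℝ) → (Fin N → Fin (T+1) → S → A → ℝ))
    (hξ : ∀ x i t s a, ξ x i t s a =
      α i * f t s (∑ a', ∑ j, α j * x j t s a')
        + α i * g t s a (∑ j, α j * x j t s a)
        + h i t s a (x i t s a)) :
    ∀ x : Fin N → Fin (T+1) → S → A → ℝ,
      (∀ i t s a j t' s' a',
        fderiv ℝ ξ x (ebN N T j t' s' a') i t s a
          = fderiv ℝ ξ x (ebN N T i t s a) j t' s' a') ∧
      ∀ v : Fin N → Fin (T+1) → S → A → ℝ, v ≠ 0 →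
        0 < ∑ i, ∑ t, ∑ s, ∑ a, v i t s a * fderiv ℝ ξ x v i t s a := by
  obtain rfl : ξ = congestionCost α f g h := by ext x i t s a; exact hξ x i t s a
  exact fun _ => (stmt8_general α (fun t s => (hf t s _).hasDerivAt)
    (fun t s a => (hg t s a _).hasDerivAt) (fun i t s a => (hh i t s a _).hasDerivAt)
    (fun t s => hf' t s _) (fun t s a => hg' t s a _)
    (fun i t s a => hh' i t s a _)).imp_left apply_ebN_comm
end

section
/- Let D ⊆ ℝⁿ be a nonempty compact convex set and F : ℝⁿ → ℝ a differentiable convex function that is α-strongly convex on D for some α > 0, with minimizer x̂ of F over D. Define the curvature constant C_F := sup { (2/γ²)(F(w) − F(x) − ⟨∇F(x), w − x⟩) : x, s ∈ D, γ ∈ (0,1], w = x + γ(s − x) }, assumed finite. Let (x^k) be Frank–Wolfe iterates: x⁰ ∈ D and x^{k+1} = (1 − γ_k) x^k + γ_k b^k where γ_k = 2/(k+2) and b^k ∈ argmin_{b ∈ D} ⟨∇F(x^k), b⟩. Then for every k ≥ 1, (α/2)‖x^k − x̂‖² ≤ 2 C_F/(k+2). -/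
open RealInnerProductSpace

/-- The set whose supremum defines the curvature constant C_F of F over D. -/
noncomputable def curvSet {n : ℕ} (D : Set (EuclideanSpace ℝ (Fin n)))
    (F : EuclideanSpace ℝ (Fin n) → ℝ) : Set ℝ :=
  {r | ∃ x ∈ D, ∃ s ∈ D, ∃ γ : ℝ, 0 < γ ∧ γ ≤ 1 ∧
    r = 2 / γ ^ 2 *
      (F (x + γ • (s - x)) - F x - ⟪gradient F x, γ • (s - x)⟫)}

/-!
Let `h k = F (x k) - F x̂`. The curvature bound controls the error of the linear model of `F` along
the segment from `x k` to `b k`, and convexity together with the choice of `b k` gives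
`F' (x k) (b k - x k) ≤ -h k`. Hence `h (k + 1) ≤ (1 - γ k) * h k + γ k ^ 2 / 2 * C`, which for
`γ k = 2 / (k + 2)` yields `h k ≤ 2 * C / (k + 2)` by induction. Strong convexity makes `F` grow
quadratically away from its minimizer, which turns the bound on values into one on distances.
-/

section Convexity

variable {E : Type*} [NormedAddCommGroup E] [NormedSpace ℝ E] {D : Set E} {F : E → ℝ} {x y : E}

theorem add_le_of_convexOn_of_hasFDerivWithinAt {F' : E →L[ℝ] ℝ} (hF : ConvexOn ℝ D F)
    (hF' : HasFDerivWithinAt F F' D x) (hx : x ∈ D) (hy : y ∈ D) :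
    F x + F' (y - x) ≤ F y := by
  let ℓ : ℝ →ᵃ[ℝ] E := AffineMap.lineMap x y
  have hderiv : HasDerivWithinAt (F ∘ ℓ) (F' (y - x)) (ℓ ⁻¹' D) 0 := by
    refine HasFDerivWithinAt.comp_hasDerivWithinAt (t := D) 0 ?_
      AffineMap.hasDerivWithinAt_lineMap (Set.mapsTo_preimage ℓ D)
    simpa [ℓ] using hF'
  have hslope : F' (y - x) ≤ slope (F ∘ ℓ) 0 1 :=
    (hF.comp_affineMap ℓ).le_slope_of_hasDerivWithinAt (by simpa [ℓ] using hx)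
      (by simpa [ℓ] using hy) one_pos hderiv
  have hslope_eq : slope (F ∘ ℓ) 0 1 = F y - F x := by simp [slope_def_field, ℓ]
  linarith

theorem modulus_norm_sub_le_sub_of_isMinOn {φ : ℝ → ℝ} (hF : UniformConvexOn D φ F)
    (hmin : IsMinOn F D x) (hx : x ∈ D) (hy : y ∈ D) :
    φ ‖y - x‖ ≤ F y - F x := by
  have hscaled : ∀ t ∈ Set.Ioo (0 : ℝ) 1, (1 - t) * φ ‖y - x‖ ≤ F y - F x := by
    rintro t ⟨ht0, ht1⟩
    have hconv : F (t • y + (1 - t) • x)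
        ≤ t * F y + (1 - t) * F x - t * (1 - t) * φ ‖y - x‖ :=
      hF.2 hy hx ht0.le (sub_nonneg.2 ht1.le) (add_sub_cancel t 1)
    have hle : F x ≤ F (t • y + (1 - t) • x) :=
      hmin (hF.1 hy hx ht0.le (sub_nonneg.2 ht1.le) (add_sub_cancel t 1))
    refine le_of_mul_le_mul_left ?_ ht0
    linarith
  have htendsto : Filter.Tendsto (fun t : ℝ ↦ (1 - t) * φ ‖y - x‖) (nhdsWithin 0 (Set.Ioi 0))
      (nhds (φ ‖y - x‖)) :=
    tendsto_nhdsWithin_of_tendsto_nhds <|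
      Continuous.tendsto' (by fun_prop) _ _ (by simp)
  exact le_of_tendsto htendsto <|
    Filter.eventually_of_mem (Ioo_mem_nhdsGT one_pos) hscaled

theorem strongConvexOn_of_forall_mem_Icc {m : ℝ} (hD : Convex ℝ D)
    (h : ∀ x ∈ D, ∀ y ∈ D, ∀ t : ℝ, 0 ≤ t → t ≤ 1 →
      F (t • x + (1 - t) • y)
        ≤ t * F x + (1 - t) * F y - m / 2 * t * (1 - t) * ‖x - y‖ ^ 2) :
    StrongConvexOn D m F := by
  refine ⟨hD, fun x hx y hy a b ha hb hab ↦ ?_⟩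
  obtain rfl : b = 1 - a := by linarith
  refine (h x hx y hy a ha (sub_nonneg.1 hb)).trans_eq ?_
  simp only [smul_eq_mul]
  ring

end Convexity

section Recurrence

theorem two_div_add_two_mem_Icc (k : ℕ) : 2 / (k + 2 : ℝ) ∈ Set.Icc (0 : ℝ) 1 :=
  ⟨by positivity, div_le_one_of_le₀ (le_add_of_nonneg_left k.cast_nonneg) (by positivity)⟩

theorem le_two_mul_div_of_frankWolfe_recurrence {h : ℕ → ℝ} {C : ℝ} (hC : 0 ≤ C)
    (hrec : ∀ k : ℕ, h (k + 1) ≤ (1 - 2 / (k + 2 : ℝ)) * h k + (2 / (k + 2 : ℝ)) ^ 2 / 2 * C)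
    {k : ℕ} (hk : 1 ≤ k) : h k ≤ 2 * C / (k + 2) := by
  induction k, hk using Nat.le_induction with
  | base =>
    -- The first step has length `2 / (0 + 2) = 1`, so no information on `h 0` is needed.
    have h1 := hrec 0
    norm_num at h1 ⊢
    linarith
  | succ k _ ih =>
    calc h (k + 1)
        ≤ (1 - 2 / (k + 2 : ℝ)) * h k + (2 / (k + 2 : ℝ)) ^ 2 / 2 * C := hrec k
      _ ≤ (1 - 2 / (k + 2 : ℝ)) * (2 * C / (k + 2)) + (2 / (k + 2 : ℝ)) ^ 2 / 2 * C := by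
        have hstep : 0 ≤ 1 - 2 / (k + 2 : ℝ) := sub_nonneg.2 (two_div_add_two_mem_Icc k).2
        gcongr
      _ = 2 * C * ((k + 1) / (k + 2) ^ 2) := by field_simp; ring
      _ ≤ 2 * C * (1 / ((k + 1 : ℕ) + 2)) := by
        have hfrac : (k + 1 : ℝ) / (k + 2) ^ 2 ≤ 1 / ((k + 1 : ℕ) + 2) := by
          rw [div_le_div_iff₀ (by positivity) (by positivity)]
          push_cast
          linarith
        gcongr
      _ = 2 * C / ((k + 1 : ℕ) + 2) := mul_one_div _ _

end Recurrence

section FrankWolfe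

variable {E : Type*} [NormedAddCommGroup E] [NormedSpace ℝ E] {D : Set E} {F : E → ℝ}
  {F' : E → E →L[ℝ] ℝ} {C : ℝ}

/-- The values whose supremum is the curvature constant of `F` over `D`. The derivative is passed
as an argument `F'`, so that the notion makes sense in a normed space and for functions that are
only differentiable within `D`; `curvSet` is the case where `F' x` is the inner product with
`gradient F x`. -/
def curvatureSet (D : Set E) (F : E → ℝ) (F' : E → E →L[ℝ] ℝ) : Set ℝ :=
  {r | ∃ x ∈ D, ∃ s ∈ D, ∃ γ : ℝ, 0 < γ ∧ γ ≤ 1 ∧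
    r = 2 / γ ^ 2 * (F (x + γ • (s - x)) - F x - F' x (γ • (s - x)))}

theorem nonneg_of_mem_upperBounds_curvatureSet (hD : D.Nonempty)
    (hC : C ∈ upperBounds (curvatureSet D F F')) : 0 ≤ C := by
  obtain ⟨x, hx⟩ := hD
  exact hC ⟨x, hx, x, hx, 1, one_pos, le_rfl, by simp⟩

theorem le_add_of_mem_upperBounds_curvatureSet (hC : C ∈ upperBounds (curvatureSet D F F'))
    {x s : E} (hx : x ∈ D) (hs : s ∈ D) {γ : ℝ} (hγ : γ ∈ Set.Icc (0 : ℝ) 1) :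
    F (x + γ • (s - x)) ≤ F x + γ * F' x (s - x) + γ ^ 2 / 2 * C := by
  obtain ⟨hγ0, hγ1⟩ := hγ
  rcases hγ0.eq_or_lt with rfl | hγ0
  · simp
  have hquot := hC ⟨x, hx, s, hs, γ, hγ0, hγ1, rfl⟩
  rw [map_smul, smul_eq_mul, div_mul_eq_mul_div, div_le_iff₀ (by positivity)] at hquot
  linarith

/-- The sequence `x` is generated by the Frank–Wolfe method for minimizing over `D` a function
with derivative `F'`, where `γ k` is the step size and `b k` the answer of the linear minimization
oracle in step `k`. -/
structure IsFrankWolfeSeq (D : Set E) (F' : E → E →L[ℝ] ℝ) (γ : ℕ → ℝ) (x b : ℕ → E) : Prop where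
  init_mem : x 0 ∈ D
  oracle_mem : ∀ k, b k ∈ D
  oracle_isMinOn : ∀ k, IsMinOn (F' (x k)) D (b k)
  succ_eq : ∀ k, x (k + 1) = (1 - γ k) • x k + γ k • b k

namespace IsFrankWolfeSeq

variable {γ : ℕ → ℝ} {x b : ℕ → E}

theorem mem (hx : IsFrankWolfeSeq D F' γ x b) (hD : Convex ℝ D)
    (hγ : ∀ k, γ k ∈ Set.Icc (0 : ℝ) 1) (k : ℕ) : x k ∈ D := by
  induction k with
  | zero => exact hx.init_mem
  | succ k ih =>
    rw [hx.succ_eq]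
    exact hD ih (hx.oracle_mem k) (sub_nonneg.2 (hγ k).2) (hγ k).1 (sub_add_cancel 1 (γ k))

theorem succ_sub_le (hx : IsFrankWolfeSeq D F' γ x b) (hF : ConvexOn ℝ D F)
    (hF' : ∀ z ∈ D, HasFDerivWithinAt F (F' z) D z) (hC : C ∈ upperBounds (curvatureSet D F F'))
    (hγ : ∀ k, γ k ∈ Set.Icc (0 : ℝ) 1) {y : E} (hy : y ∈ D) (k : ℕ) :
    F (x (k + 1)) - F y ≤ (1 - γ k) * (F (x k) - F y) + γ k ^ 2 / 2 * C := by
  have hxk : x k ∈ D := hx.mem hF.1 hγ k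
  have hgap : F' (x k) (b k - x k) ≤ F y - F (x k) :=
    calc F' (x k) (b k - x k)
        ≤ F' (x k) (y - x k) := by
          simpa only [map_sub] using sub_le_sub_right (hx.oracle_isMinOn k hy) _
      _ ≤ F y - F (x k) :=
          le_sub_iff_add_le'.2 (add_le_of_convexOn_of_hasFDerivWithinAt hF (hF' _ hxk) hxk hy)
  have hsucc : x (k + 1) = x k + γ k • (b k - x k) := by
    rw [hx.succ_eq]
    module
  calc F (x (k + 1)) - F y
      ≤ F (x k) + γ k * F' (x k) (b k - x k) + γ k ^ 2 / 2 * C - F y := by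
        rw [hsucc]
        gcongr
        exact le_add_of_mem_upperBounds_curvatureSet hC hxk (hx.oracle_mem k) (hγ k)
    _ ≤ F (x k) + γ k * (F y - F (x k)) + γ k ^ 2 / 2 * C - F y := by
        gcongr
        exact (hγ k).1
    _ = (1 - γ k) * (F (x k) - F y) + γ k ^ 2 / 2 * C := by ring

theorem sub_le_two_mul_div (hx : IsFrankWolfeSeq D F' (fun k ↦ 2 / (k + 2)) x b)
    (hF : ConvexOn ℝ D F) (hF' : ∀ z ∈ D, HasFDerivWithinAt F (F' z) D z)
    (hC : C ∈ upperBounds (curvatureSet D F F')) {y : E} (hy : y ∈ D) {k : ℕ} (hk : 1 ≤ k) :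
    F (x k) - F y ≤ 2 * C / (k + 2) :=
  le_two_mul_div_of_frankWolfe_recurrence (h := fun k ↦ F (x k) - F y)
    (nonneg_of_mem_upperBounds_curvatureSet ⟨y, hy⟩ hC)
    (hx.succ_sub_le hF hF' hC two_div_add_two_mem_Icc hy) hk

end IsFrankWolfeSeq

theorem stmt9_general {x b : ℕ → E} {φ : ℝ → ℝ} (hF : UniformConvexOn D φ F) (hφ : 0 ≤ φ)
    (hF' : ∀ z ∈ D, HasFDerivWithinAt F (F' z) D z) (hC : C ∈ upperBounds (curvatureSet D F F'))
    {xhat : E} (hxhat : xhat ∈ D) (hmin : IsMinOn F D xhat)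
    (hx : IsFrankWolfeSeq D F' (fun k ↦ 2 / (k + 2)) x b) {k : ℕ} (hk : 1 ≤ k) :
    φ ‖x k - xhat‖ ≤ 2 * C / (k + 2) :=
  (modulus_norm_sub_le_sub_of_isMinOn hF hmin hxhat (hx.mem hF.1 two_div_add_two_mem_Icc k)).trans
    (hx.sub_le_two_mul_div (hF.convexOn hφ) hF' hC hxhat hk)

end FrankWolfe

/-- For a differentiable convex F that is α-strongly convex on a nonempty
compact convex D, with minimizer x̂ over D and finite curvature constant C_F, the
Frank–Wolfe iterates with step size γ_k = 2/(k+2) satisfy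
(α/2)‖xᵏ − x̂‖² ≤ 2 C_F/(k+2) for all k ≥ 1. -/
theorem stmt9 {n : ℕ} (D : Set (EuclideanSpace ℝ (Fin n)))
    (hDne : D.Nonempty) (hDcomp : IsCompact D) (hDconv : Convex ℝ D)
    (F : EuclideanSpace ℝ (Fin n) → ℝ)
    (hFdiff : Differentiable ℝ F) (hFconv : ConvexOn ℝ Set.univ F)
    (α : ℝ) (hαpos : 0 < α)
    (hsc : ∀ x ∈ D, ∀ y ∈ D, ∀ l : ℝ, 0 ≤ l → l ≤ 1 →
      F (l • x + (1 - l) • y)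
        ≤ l * F x + (1 - l) * F y - α / 2 * l * (1 - l) * ‖x - y‖ ^ 2)
    (xhat : EuclideanSpace ℝ (Fin n)) (hxhatD : xhat ∈ D)
    (hxhatmin : ∀ y ∈ D, F xhat ≤ F y)
    (hbdd : BddAbove (curvSet D F))
    (x b : ℕ → EuclideanSpace ℝ (Fin n)) (hx0 : x 0 ∈ D)
    (hbmem : ∀ k, b k ∈ D)
    (hbmin : ∀ k, ∀ c ∈ D, ⟪gradient F (x k), b k⟫ ≤ ⟪gradient F (x k), c⟫)
    (hiter : ∀ k : ℕ,
      x (k+1) = (1 - 2 / (k + 2 : ℝ)) • x k + (2 / (k + 2 : ℝ)) • b k) :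
    ∀ k : ℕ, 1 ≤ k →
      α / 2 * ‖x k - xhat‖ ^ 2 ≤ 2 * sSup (curvSet D F) / (k + 2) := by
  intro k hk
  exact stmt9_general (F' := fun z ↦ innerSL ℝ (gradient F z))
    (strongConvexOn_of_forall_mem_Icc hDconv hsc) (fun r ↦ by positivity)
    (fun z _ ↦ (hFdiff z).hasGradientAt.hasFDerivAt.hasFDerivWithinAt)
    (fun _ hr ↦ le_csSup hbdd hr) hxhatD hxhatmin ⟨hx0, hbmem, hbmin, hiter⟩ hk
end

section
/- Let D ⊆ ℝⁿ be a nonempty compact convex set and F : ℝⁿ → ℝ a differentiable convex function with finite curvature constant C_F := sup { (2/γ²)(F(w) − F(x) − ⟨∇F(x), w − x⟩) : x, s ∈ D, γ ∈ (0,1], w = x + γ(s − x) }, and let x̂ minimize F over D. Let (x^k) be Frank–Wolfe iterates: x⁰ ∈ D and x^{k+1} = (1 − γ_k) x^k + γ_k b^k where γ_k = 2/(k+2) and b^k ∈ argmin_{b ∈ D} ⟨∇F(x^k), b⟩. Then for every k ≥ 1, F(x^k) − F(x̂) ≤ 2 C_F/(k+2). -/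
open RealInnerProductSpace

/-!
Let `hₖ = F(xᵏ) - F(y)` for a point `y` of `D`. By convexity the linearization of `F` at `xᵏ`
is at most `F(y)` at `y`, and `bᵏ` minimizes it over `D`, so a step of size `γ` towards `bᵏ` lowers
it by at least `γ hₖ`; the curvature constant `C` bounds the remainder by `γ² C / 2`. Hence
`hₖ₊₁ ≤ (1 - γₖ) hₖ + γₖ² C / 2`. As `γ₀ = 1`, the initial error `h₀` drops out after one step, and
the rate follows by induction from `(k + 1) (k + 3) ≤ (k + 2)²`.
-/

section FrankWolfe

variable {E : Type*} [AddCommGroup E] [Module ℝ E] {D : Set E} {F : E → ℝ}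
  {F' : E → E →ₗ[ℝ] ℝ} {C : ℝ}

/-- `C` bounds the curvature of `F` over `D`, where the linear form `F' x` plays the role of the
derivative of `F` at `x`. The least such `C` is the curvature constant; the quotient by `γ ^ 2` in
its definition is cleared here. -/
def HasCurvatureBound (D : Set E) (F : E → ℝ) (F' : E → E →ₗ[ℝ] ℝ) (C : ℝ) : Prop :=
  ∀ x ∈ D, ∀ s ∈ D, ∀ γ ∈ Set.Ioc (0 : ℝ) 1,
    F (x + γ • (s - x)) ≤ F x + γ * F' x (s - x) + γ ^ 2 / 2 * C

/-- `x` is a sequence of Frank–Wolfe iterates in `D` with step sizes `γ`, and `b k` is a minimizer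
over `D` of the linear form `F' (x k)`. -/
structure IsFrankWolfe (D : Set E) (F' : E → E →ₗ[ℝ] ℝ) (γ : ℕ → ℝ) (x b : ℕ → E) : Prop where
  init_mem : x 0 ∈ D
  minimizer_mem : ∀ k, b k ∈ D
  isMinOn_minimizer : ∀ k, IsMinOn (F' (x k)) D (b k)
  iterate_succ : ∀ k, x (k + 1) = (1 - γ k) • x k + γ k • b k

theorem add_le_of_convexOn_of_hasLineDerivWithinAt {x y : E} {m : ℝ} (hF : ConvexOn ℝ D F)
    (hx : x ∈ D) (hy : y ∈ D) (hm : HasLineDerivWithinAt ℝ F m D x (y - x)) :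
    F x + m ≤ F y := by
  have hline : ConvexOn ℝ ((fun t : ℝ ↦ x + t • (y - x)) ⁻¹' D) fun t ↦ F (x + t • (y - x)) := by
    have hmap : (AffineMap.lineMap x y : ℝ → E) = fun t ↦ x + t • (y - x) := by
      funext t
      rw [AffineMap.lineMap_apply_module', add_comm]
    simpa only [hmap, Function.comp_def] using
      hF.comp_affineMap (AffineMap.lineMap x y : ℝ →ᵃ[ℝ] E)
  have hslope := hline.le_slope_of_hasDerivWithinAt (x := 0) (y := 1) (by simpa using hx)
    (by simpa using hy) one_pos hm
  simp only [slope_def_field, one_smul, zero_smul, add_zero, add_sub_cancel, sub_zero,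
    div_one] at hslope
  linarith

theorem HasCurvatureBound.nonneg (hC : HasCurvatureBound D F F' C) (hD : D.Nonempty) : 0 ≤ C := by
  obtain ⟨x, hx⟩ := hD
  simpa using hC x hx x hx 1 ⟨one_pos, le_rfl⟩

theorem HasCurvatureBound.apply_step_sub_le {x b y : E} {γ : ℝ} (hC : HasCurvatureBound D F F' C)
    (hx : x ∈ D) (hb : b ∈ D) (hγ : γ ∈ Set.Ioc (0 : ℝ) 1) (hby : F' x b ≤ F' x y)
    (hxy : F x + F' x (y - x) ≤ F y) :
    F (x + γ • (b - x)) - F y ≤ (1 - γ) * (F x - F y) + γ ^ 2 / 2 * C := by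
  have hgap : F' x (b - x) ≤ F y - F x := by
    rw [map_sub] at hxy ⊢
    linarith
  have hdecrease : γ * F' x (b - x) ≤ γ * (F y - F x) := mul_le_mul_of_nonneg_left hgap hγ.1.le
  linarith [hC x hx b hb γ hγ]

namespace IsFrankWolfe

variable {γ : ℕ → ℝ} {x b : ℕ → E}

theorem iterate_mem (h : IsFrankWolfe D F' γ x b) (hD : Convex ℝ D)
    (hγ : ∀ k, γ k ∈ Set.Icc (0 : ℝ) 1) : ∀ k, x k ∈ D
  | 0 => h.init_mem
  | k + 1 => by
    rw [h.iterate_succ]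
    exact hD (h.iterate_mem hD hγ k) (h.minimizer_mem k) (sub_nonneg.2 (hγ k).2) (hγ k).1
      (sub_add_cancel _ _)

theorem apply_succ_sub_le (h : IsFrankWolfe D F' γ x b) (hF : ConvexOn ℝ D F)
    (hF' : ∀ x ∈ D, ∀ y ∈ D, HasLineDerivWithinAt ℝ F (F' x (y - x)) D x (y - x))
    (hC : HasCurvatureBound D F F' C) (hγ : ∀ k, γ k ∈ Set.Ioc (0 : ℝ) 1)
    {y : E} (hy : y ∈ D) (k : ℕ) :
    F (x (k + 1)) - F y ≤ (1 - γ k) * (F (x k) - F y) + γ k ^ 2 / 2 * C := by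
  have hxk : x k ∈ D := h.iterate_mem hF.1 (fun k ↦ Set.Ioc_subset_Icc_self (hγ k)) k
  have hstep : x (k + 1) = x k + γ k • (b k - x k) := by
    rw [h.iterate_succ]
    module
  rw [hstep]
  exact hC.apply_step_sub_le hxk (h.minimizer_mem k) (hγ k) (h.isMinOn_minimizer k hy)
    (add_le_of_convexOn_of_hasLineDerivWithinAt hF hxk hy (hF' _ hxk _ hy))

end IsFrankWolfe

theorem two_div_add_two_mem_Ioc (k : ℕ) : 2 / (k + 2 : ℝ) ∈ Set.Ioc (0 : ℝ) 1 :=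
  ⟨by positivity, (div_le_one (by positivity)).2 (le_add_of_nonneg_left k.cast_nonneg)⟩

theorem le_two_mul_div_of_succ_le {h : ℕ → ℝ} (hC : 0 ≤ C)
    (hsucc : ∀ k : ℕ, h (k + 1) ≤ (1 - 2 / (k + 2 : ℝ)) * h k + (2 / (k + 2 : ℝ)) ^ 2 / 2 * C)
    {k : ℕ} (hk : 1 ≤ k) : h k ≤ 2 * C / (k + 2) := by
  induction k, hk using Nat.le_induction with
  | base =>
    have hone := hsucc 0
    norm_num at hone ⊢
    linarith
  | succ k _ ih =>
    have hcoeff : 0 ≤ 1 - 2 / (k + 2 : ℝ) := sub_nonneg.2 (two_div_add_two_mem_Ioc k).2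
    have hratio : ((k : ℝ) + 1) / (k + 2) ^ 2 ≤ 1 / (k + 3) := by
      rw [div_le_div_iff₀ (by positivity) (by positivity)]
      linarith
    calc h (k + 1)
        ≤ (1 - 2 / (k + 2 : ℝ)) * h k + (2 / (k + 2 : ℝ)) ^ 2 / 2 * C := hsucc k
      _ ≤ (1 - 2 / (k + 2 : ℝ)) * (2 * C / (k + 2)) + (2 / (k + 2 : ℝ)) ^ 2 / 2 * C := by gcongr
      _ = 2 * C * ((k + 1) / (k + 2) ^ 2) := by field_simp; ring
      _ ≤ 2 * C * (1 / (k + 3)) := by gcongr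
      _ = 2 * C / ((k + 1 : ℕ) + 2) := by push_cast; ring

theorem stmt11_general (hF : ConvexOn ℝ D F)
    (hF' : ∀ x ∈ D, ∀ y ∈ D, HasLineDerivWithinAt ℝ F (F' x (y - x)) D x (y - x))
    (hC : HasCurvatureBound D F F' C) {x b : ℕ → E}
    (h : IsFrankWolfe D F' (fun k ↦ 2 / (k + 2 : ℝ)) x b) {y : E} (hy : y ∈ D)
    {k : ℕ} (hk : 1 ≤ k) : F (x k) - F y ≤ 2 * C / (k + 2) :=
  le_two_mul_div_of_succ_le (h := fun k ↦ F (x k) - F y) (hC.nonneg ⟨y, hy⟩)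
    (h.apply_succ_sub_le hF hF' hC two_div_add_two_mem_Ioc hy) hk

end FrankWolfe

theorem hasLineDerivAt_inner_gradient {E : Type*} [NormedAddCommGroup E] [InnerProductSpace ℝ E]
    [CompleteSpace E] {f : E → ℝ} {x : E} (hf : DifferentiableAt ℝ f x) (v : E) :
    HasLineDerivAt ℝ f ⟪gradient f x, v⟫ x v := by
  rw [inner_gradient_left]
  exact hf.hasFDerivAt.hasLineDerivAt v

theorem hasCurvatureBound_sSup_curvSet {n : ℕ} {D : Set (EuclideanSpace ℝ (Fin n))}
    {F : EuclideanSpace ℝ (Fin n) → ℝ} (hbdd : BddAbove (curvSet D F)) :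
    HasCurvatureBound D F (fun x ↦ innerₛₗ ℝ (gradient F x)) (sSup (curvSet D F)) := by
  rintro x hx s hs γ ⟨hγ0, hγ1⟩
  have hquot := le_csSup hbdd ⟨x, hx, s, hs, γ, hγ0, hγ1, rfl⟩
  rw [div_mul_eq_mul_div, div_le_iff₀ (by positivity), inner_smul_right] at hquot
  rw [innerₛₗ_apply_apply]
  linarith

/-- For a differentiable convex F on a nonempty compact convex D with finite
curvature constant C_F and minimizer x̂ over D, the Frank–Wolfe iterates with step size
γ_k = 2/(k+2) satisfy F(xᵏ) − F(x̂) ≤ 2 C_F/(k+2) for all k ≥ 1. -/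
theorem stmt11 {n : ℕ} (D : Set (EuclideanSpace ℝ (Fin n)))
    (hDne : D.Nonempty) (hDcomp : IsCompact D) (hDconv : Convex ℝ D)
    (F : EuclideanSpace ℝ (Fin n) → ℝ)
    (hFdiff : Differentiable ℝ F) (hFconv : ConvexOn ℝ Set.univ F)
    (hbdd : BddAbove (curvSet D F))
    (xhat : EuclideanSpace ℝ (Fin n)) (hxhatD : xhat ∈ D)
    (hxhatmin : ∀ y ∈ D, F xhat ≤ F y)
    (x b : ℕ → EuclideanSpace ℝ (Fin n)) (hx0 : x 0 ∈ D)
    (hbmem : ∀ k, b k ∈ D)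
    (hbmin : ∀ k, ∀ c ∈ D, ⟪gradient F (x k), b k⟫ ≤ ⟪gradient F (x k), c⟫)
    (hiter : ∀ k : ℕ,
      x (k+1) = (1 - 2 / (k + 2 : ℝ)) • x k + (2 / (k + 2 : ℝ)) • b k) :
    ∀ k : ℕ, 1 ≤ k → F (x k) - F xhat ≤ 2 * sSup (curvSet D F) / (k + 2) :=
  fun _ hk ↦ stmt11_general (hFconv.subset (Set.subset_univ D) hDconv)
    (fun x _ y _ ↦ (hasLineDerivAt_inner_gradient (hFdiff x) (y - x)).hasLineDerivWithinAt D)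
    (hasCurvatureBound_sSup_curvSet hbdd) ⟨hx0, hbmem, hbmin, hiter⟩ hxhatD hk
end

section
/- Let P be a transition kernel, z₀ : S → ℝ with z₀ ≥ 0, and C : {0,...,T} × S × A → ℝ a cost. Define the value functions V by backward value iteration: V(T,s) = min_{a} C(T,s,a), and V(t-1,s) = min_{a} ( C(t-1,s,a) + ∑_{s'} P(t,s',s,a) V(t,s') ) for t ∈ {1,...,T}. Then every x ∈ 𝒳(P, z₀) satisfies ∑_{t,s,a} C(t,s,a) x(t,s,a) ≥ ∑_{s} V(0,s) z₀(s). -/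
open Finset

/-!
This is weak duality for the linear program over `𝒳(P, z₀)`: value functions are dual feasible.
Let `W t = ∑ s, V t s * ∑ a, x t s a` be the value of the state marginal at time `t`. Moving the
kernel from `x` onto `V` turns `W (t + 1)` into a sum of expected continuation values, so the
Bellman inequality gives `W t ≤ K t + W (t + 1)` with `K t` the cost paid at time `t`; at the
horizon `W T ≤ K T`, and chaining these inequalities yields `W 0 ≤ ∑ t, K t`.
-/

theorem le_sum_of_le_add_succ {M : Type*} [AddCommMonoid M] [Preorder M] [IsOrderedAddMonoid M]
    {T : ℕ} {W K : Fin (T + 1) → M} (hlast : W (Fin.last T) ≤ K (Fin.last T))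
    (hstep : ∀ t : Fin T, W t.castSucc ≤ K t.castSucc + W t.succ) :
    W 0 ≤ ∑ t, K t := by
  induction T with
  | zero => simpa using hlast
  | succ T ih =>
    rw [Fin.sum_univ_succ]
    have htail : W (Fin.succ 0) ≤ ∑ t : Fin (T + 1), K t.succ :=
      ih (W := fun t => W t.succ) (K := fun t => K t.succ) hlast fun t => hstep t.succ
    exact (hstep 0).trans (add_le_add_right htail (K 0))

section WeakDuality

variable {S A R : Type*} [Fintype S] [Fintype A] [CommSemiring R]

theorem sum_mul_sum_kernel_mul (p : S → S → A → R) (v : S → R) (m : S → A → R) :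
    ∑ s', v s' * ∑ s, ∑ a, p s' s a * m s a = ∑ s, ∑ a, (∑ s', p s' s a * v s') * m s a := by
  simp_rw [mul_sum, sum_mul]
  rw [sum_comm]
  refine sum_congr rfl fun s _ => ?_
  rw [sum_comm]
  exact sum_congr rfl fun a _ => sum_congr rfl fun s' _ => by ring

variable [PartialOrder R] [IsOrderedRing R]

theorem sum_mul_sum_le_sum_sum_mul {v : S → R} {q m : S → A → R}
    (hvq : ∀ s a, v s ≤ q s a) (hm : ∀ s a, 0 ≤ m s a) :
    ∑ s, v s * ∑ a, m s a ≤ ∑ s, ∑ a, q s a * m s a := by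
  simp_rw [mul_sum]
  exact sum_le_sum fun s _ => sum_le_sum fun a _ =>
    mul_le_mul_of_nonneg_right (hvq s a) (hm s a)

theorem sum_mul_sum_le_add_of_bellman_le {p : S → S → A → R} {v v' : S → R}
    {c m m' : S → A → R} (hv : ∀ s a, v s ≤ c s a + ∑ s', p s' s a * v' s')
    (hm : ∀ s a, 0 ≤ m s a) (hm' : ∀ s', ∑ s, ∑ a, p s' s a * m s a = ∑ a, m' s' a) :
    ∑ s, v s * ∑ a, m s a ≤ ∑ s, ∑ a, c s a * m s a + ∑ s', v' s' * ∑ a, m' s' a :=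
  calc
    ∑ s, v s * ∑ a, m s a
        ≤ ∑ s, ∑ a, (c s a + ∑ s', p s' s a * v' s') * m s a :=
      sum_mul_sum_le_sum_sum_mul hv hm
    _ = ∑ s, ∑ a, c s a * m s a + ∑ s, ∑ a, (∑ s', p s' s a * v' s') * m s a := by
      simp only [add_mul, sum_add_distrib]
    _ = ∑ s, ∑ a, c s a * m s a + ∑ s', v' s' * ∑ a, m' s' a := by
      simp only [← sum_mul_sum_kernel_mul, hm']

theorem stmt15_general {T : ℕ} {P : Fin (T + 1) → S → S → A → R} {z0 : S → R}
    {C x : Fin (T + 1) → S → A → R} {V : Fin (T + 1) → S → R}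
    (hVT : ∀ s a, V (Fin.last T) s ≤ C (Fin.last T) s a)
    (hVt : ∀ (t : Fin T) (s : S) (a : A),
      V t.castSucc s ≤ C t.castSucc s a + ∑ s', P t.succ s' s a * V t.succ s')
    (hx : ∀ t s a, 0 ≤ x t s a) (hx0 : ∀ s, ∑ a, x 0 s a = z0 s)
    (hxt : ∀ (t : Fin T) (s : S),
      ∑ s', ∑ a, P t.succ s s' a * x t.castSucc s' a = ∑ a, x t.succ s a) :
    ∑ s, V 0 s * z0 s ≤ ∑ t, ∑ s, ∑ a, C t s a * x t s a := by
  simp only [← hx0]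
  exact le_sum_of_le_add_succ (W := fun t => ∑ s, V t s * ∑ a, x t s a)
    (sum_mul_sum_le_sum_sum_mul hVT (hx _))
    fun t => sum_mul_sum_le_add_of_bellman_le (hVt t) (hx _) (hxt t)

end WeakDuality

/-- With value functions V from backward value iteration
(V(T,s) = min_a C(T,s,a); V(t−1,s) = min_a (C(t−1,s,a) + ∑_{s'} P(t,s',s,a) V(t,s'))),
every x ∈ 𝒳(P,z₀) satisfies ∑_{t,s,a} C(t,s,a) x(t,s,a) ≥ ∑_s V(0,s) z₀(s). -/
theorem stmt15 {S A : Type*} [Fintype S] [Fintype A] [Nonempty S] [Nonempty A] {T : ℕ}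
    (P : Fin (T+1) → S → S → A → ℝ) (hP : IsKernel T P)
    (z0 : S → ℝ) (hz0 : ∀ s, 0 ≤ z0 s)
    (C : Fin (T+1) → S → A → ℝ) (V : Fin (T+1) → S → ℝ)
    (hVT : ∀ s, V (Fin.last T) s
      = Finset.univ.inf' Finset.univ_nonempty (fun a => C (Fin.last T) s a))
    (hVt : ∀ (t : ℕ) (ht : t < T), ∀ s,
      V ⟨t, by omega⟩ s = Finset.univ.inf' Finset.univ_nonempty (fun a =>
        C ⟨t, by omega⟩ s a
          + ∑ s', P ⟨t+1, by omega⟩ s' s a * V ⟨t+1, by omega⟩ s')) :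
    ∀ x ∈ Feas T P z0,
      ∑ s, V 0 s * z0 s ≤ ∑ t, ∑ s, ∑ a, C t s a * x t s a := by
  exact fun x ⟨hx, hx0, hxt⟩ => stmt15_general
    (fun s a => (hVT s).trans_le (inf'_le _ (mem_univ a)))
    (fun t s a => (hVt t t.isLt s).trans_le (inf'_le _ (mem_univ a)))
    hx hx0 fun t => hxt t t.isLt
end

section
/- Let P be a transition kernel, z₀ : S → ℝ with z₀ ≥ 0, and C : {0,...,T} × S × A → ℝ a cost, with value functions V defined by backward value iteration: V(T,s) = min_{a} C(T,s,a) and V(t-1,s) = min_{a} ( C(t-1,s,a) + ∑_{s'} P(t,s',s,a) V(t,s') ) for t ∈ {1,...,T}. Let π : {0,...,T} × S → A be any greedy policy, i.e., π(T,s) ∈ argmin_{a} C(T,s,a) and π(t-1,s) ∈ argmin_{a} ( C(t-1,s,a) + ∑_{s'} P(t,s',s,a) V(t,s') ), and let d be the distribution induced by π: d(0,s,a) = z₀(s) if a = π(0,s) and 0 otherwise; d(t,s,a) = ∑_{s',a'} P(t,s,s',a') d(t-1,s',a') if a = π(t,s) and 0 otherwise. Then ∑_{t,s,a} C(t,s,a)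 d(t,s,a) = ∑_{s} V(0,s) z₀(s); in particular d minimizes x ↦ ∑_{t,s,a} C(t,s,a) x(t,s,a) over 𝒳(P, z₀). -/
open Finset

/-!
The identity behind everything is the performance-difference formula: multiplying flow conservation
by `V` and telescoping in time, the cost of any flow `x` is `∑ s, V 0 s * z s` plus the total
advantage `∑ (Q - V) x`, where `Q` is the one-step lookahead of `V`. The advantages are nonnegative
because `V` is the minimum of `Q`, so `∑ s, V 0 s * z s` bounds every feasible cost from below; they
vanish on the support of the distribution of a greedy policy, so this distribution attains the
bound.
-/

section Lookahead

variable {S A R : Type*} [Fintype S] [CommRing R] {T : ℕ}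

/-- The one-step lookahead (Q-value) of `V`: the cost of an action now, plus, before the horizon,
the expected value of `V` at the next time. Here `P i` is the transition kernel from time `i` to
time `i + 1`, written `P(i + 1, ⋅)` in the informal statement. -/
def bellmanQ (P : Fin T → S → S → A → R) (C : Fin (T + 1) → S → A → R) (V : Fin (T + 1) → S → R) :
    Fin (T + 1) → S → A → R :=
  Fin.snoc (fun i s a => C i.castSucc s a + ∑ s', P i s' s a * V i.succ s') (C (Fin.last T))

theorem bellmanQ_last (P : Fin T → S → S → A → R) (C : Fin (T + 1) → S → A → R)
    (V : Fin (T + 1) → S → R) : bellmanQ P C V (Fin.last T) = C (Fin.last T) :=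
  Fin.snoc_last ..

theorem bellmanQ_castSucc (P : Fin T → S → S → A → R) (C : Fin (T + 1) → S → A → R)
    (V : Fin (T + 1) → S → R) (i : Fin T) :
    bellmanQ P C V i.castSucc =
      fun s a => C i.castSucc s a + ∑ s', P i s' s a * V i.succ s' :=
  Fin.snoc_castSucc ..

end Lookahead

section Flow

variable {S A R : Type*} [Fintype S] [Fintype A] [CommRing R] {T : ℕ}
  {P : Fin T → S → S → A → R} {z : S → R} {x : Fin (T + 1) → S → A → R}

/-- Flow conservation: the linear equations of `𝒳(P, z)`, without the sign constraint. -/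
structure IsFlow (P : Fin T → S → S → A → R) (z : S → R) (x : Fin (T + 1) → S → A → R) : Prop where
  initial : ∀ s, ∑ a, x 0 s a = z s
  conserve : ∀ i s, ∑ s', ∑ a, P i s s' a * x i.castSucc s' a = ∑ a, x i.succ s a

namespace IsFlow

theorem sum_mul_sum_succ (hx : IsFlow P z x) (W : S → R) (i : Fin T) :
    ∑ s, W s * ∑ a, x i.succ s a =
      ∑ s, ∑ a, (∑ s', P i s' s a * W s') * x i.castSucc s a := by
  simp only [← hx.conserve, mul_sum, sum_mul]
  rw [sum_comm]
  refine sum_congr rfl fun s _ => ?_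
  rw [sum_comm]
  exact sum_congr rfl fun a _ => sum_congr rfl fun s' _ => by ring

theorem sum_bellmanQ_mul (hx : IsFlow P z x) (C : Fin (T + 1) → S → A → R)
    (V : Fin (T + 1) → S → R) :
    ∑ t, ∑ s, ∑ a, bellmanQ P C V t s a * x t s a =
      ∑ t, ∑ s, ∑ a, C t s a * x t s a + ∑ i : Fin T, ∑ s, V i.succ s * ∑ a, x i.succ s a := by
  simp only [Fin.sum_univ_castSucc (n := T), bellmanQ_last, bellmanQ_castSucc, add_mul,
    sum_add_distrib, hx.sum_mul_sum_succ]
  ring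

theorem sum_cost_mul_eq_add_sum_advantage_mul (hx : IsFlow P z x) (C : Fin (T + 1) → S → A → R)
    (V : Fin (T + 1) → S → R) :
    ∑ t, ∑ s, ∑ a, C t s a * x t s a =
      ∑ s, V 0 s * z s + ∑ t, ∑ s, ∑ a, (bellmanQ P C V t s a - V t s) * x t s a := by
  have total_value : ∑ t, ∑ s, ∑ a, V t s * x t s a =
      ∑ s, V 0 s * z s + ∑ i : Fin T, ∑ s, V i.succ s * ∑ a, x i.succ s a := by
    simp only [Fin.sum_univ_succ (n := T), ← mul_sum, hx.initial]
  simp only [sub_mul, sum_sub_distrib, hx.sum_bellmanQ_mul, total_value]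
  ring

theorem sum_value_mul_le_sum_cost_mul [PartialOrder R] [IsOrderedRing R] (hx : IsFlow P z x)
    (hx0 : 0 ≤ x) {C : Fin (T + 1) → S → A → R} {V : Fin (T + 1) → S → R}
    (hV : ∀ t s a, V t s ≤ bellmanQ P C V t s a) :
    ∑ s, V 0 s * z s ≤ ∑ t, ∑ s, ∑ a, C t s a * x t s a := by
  rw [hx.sum_cost_mul_eq_add_sum_advantage_mul C V]
  exact le_add_of_nonneg_right <| sum_nonneg fun t _ => sum_nonneg fun s _ => sum_nonneg fun a _ =>
    mul_nonneg (sub_nonneg.2 (hV t s a)) (hx0 t s a)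

theorem sum_cost_mul_eq_sum_value_mul (hx : IsFlow P z x) {C : Fin (T + 1) → S → A → R}
    {V : Fin (T + 1) → S → R} (hV : ∀ t s a, x t s a ≠ 0 → bellmanQ P C V t s a = V t s) :
    ∑ t, ∑ s, ∑ a, C t s a * x t s a = ∑ s, V 0 s * z s := by
  have advantage_mul_eq_zero (t s a) : (bellmanQ P C V t s a - V t s) * x t s a = 0 := by
    by_cases h : x t s a = 0
    · rw [h, mul_zero]
    · rw [hV t s a h, sub_self, zero_mul]
  simp only [hx.sum_cost_mul_eq_add_sum_advantage_mul C V, advantage_mul_eq_zero, sum_const_zero,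
    add_zero]

end IsFlow

end Flow

section InducedDistribution

variable {S A R : Type*} [Fintype S] [Fintype A] [DecidableEq A] [CommRing R] {T : ℕ}
  {P : Fin T → S → S → A → R} {z : S → R} {π : Fin (T + 1) → S → A}
  {d : Fin (T + 1) → S → A → R}

/-- `d` is the state-action distribution of the deterministic policy `π`, started from `z`; it is
characterized by its recursion in time rather than constructed. -/
structure IsInducedDistribution (P : Fin T → S → S → A → R) (z : S → R) (π : Fin (T + 1) → S → A)
    (d : Fin (T + 1) → S → A → R) : Prop where
  initial : ∀ s a, d 0 s a = if a = π 0 s then z s else 0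
  step : ∀ i s a, d i.succ s a =
    if a = π i.succ s then ∑ s', ∑ a', P i s s' a' * d i.castSucc s' a' else 0

namespace IsInducedDistribution

theorem eq_policy_of_ne_zero (hd : IsInducedDistribution P z π d) {t : Fin (T + 1)} {s : S} {a : A}
    (h : d t s a ≠ 0) : a = π t s := by
  contrapose! h
  cases t using Fin.cases with
  | zero => rw [hd.initial, if_neg h]
  | succ i => rw [hd.step, if_neg h]

theorem isFlow (hd : IsInducedDistribution P z π d) : IsFlow P z d where
  initial s := by simp [hd.initial]
  conserve i s := by simp [hd.step]

theorem nonneg [PartialOrder R] [IsOrderedRing R] (hd : IsInducedDistribution P z π d)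
    (hP : 0 ≤ P) (hz : 0 ≤ z) : 0 ≤ d := by
  intro t
  induction t using Fin.induction with
  | zero =>
    intro s a
    rw [hd.initial]
    exact ite_nonneg (hz s) le_rfl
  | succ i ih =>
    intro s a
    rw [hd.step]
    exact ite_nonneg (sum_nonneg fun s' _ => sum_nonneg fun a' _ =>
      mul_nonneg (hP i s s' a') (ih s' a')) le_rfl

end IsInducedDistribution

end InducedDistribution

section ValueIteration

variable {S A R : Type*} [Fintype S] [CommRing R] [LinearOrder R] {T : ℕ}
  {P : Fin T → S → S → A → R} {C : Fin (T + 1) → S → A → R} {V : Fin (T + 1) → S → R}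
  {π : Fin (T + 1) → S → A}

/-- `V` is produced by backward value iteration, i.e. solves the Bellman equations. -/
structure IsValueFunction [Fintype A] [Nonempty A] (P : Fin T → S → S → A → R)
    (C : Fin (T + 1) → S → A → R) (V : Fin (T + 1) → S → R) : Prop where
  last : ∀ s, V (Fin.last T) s = univ.inf' univ_nonempty fun a => C (Fin.last T) s a
  step : ∀ i s, V i.castSucc s = univ.inf' univ_nonempty fun a =>
    C i.castSucc s a + ∑ s', P i s' s a * V i.succ s'

/-- `π` is greedy for `V`: it always picks a minimizer of the one-step lookahead. -/
structure IsGreedy (P : Fin T → S → S → A → R) (C : Fin (T + 1) → S → A → R)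
    (V : Fin (T + 1) → S → R) (π : Fin (T + 1) → S → A) : Prop where
  last : ∀ s a, C (Fin.last T) s (π (Fin.last T) s) ≤ C (Fin.last T) s a
  step : ∀ i s a,
    C i.castSucc s (π i.castSucc s) + ∑ s', P i s' s (π i.castSucc s) * V i.succ s' ≤
      C i.castSucc s a + ∑ s', P i s' s a * V i.succ s'

theorem IsGreedy.bellmanQ_le (hπ : IsGreedy P C V π) (t : Fin (T + 1)) (s : S) (a : A) :
    bellmanQ P C V t s (π t s) ≤ bellmanQ P C V t s a := by
  cases t using Fin.lastCases with
  | last => simpa only [bellmanQ_last] using hπ.last s a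
  | cast i => simpa only [bellmanQ_castSucc] using hπ.step i s a

variable [Fintype A] [Nonempty A]

namespace IsValueFunction

theorem eq_inf'_bellmanQ (hV : IsValueFunction P C V) (t : Fin (T + 1)) (s : S) :
    V t s = univ.inf' univ_nonempty (bellmanQ P C V t s) := by
  cases t using Fin.lastCases with
  | last => rw [bellmanQ_last, hV.last]
  | cast i => rw [bellmanQ_castSucc, hV.step]

theorem le_bellmanQ (hV : IsValueFunction P C V) (t : Fin (T + 1)) (s : S) (a : A) :
    V t s ≤ bellmanQ P C V t s a :=
  (hV.eq_inf'_bellmanQ t s).trans_le (inf'_le _ (mem_univ a))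

theorem bellmanQ_policy_eq (hV : IsValueFunction P C V) (hπ : IsGreedy P C V π) (t : Fin (T + 1))
    (s : S) : bellmanQ P C V t s (π t s) = V t s := by
  refine le_antisymm ?_ (hV.le_bellmanQ t s _)
  rw [hV.eq_inf'_bellmanQ]
  exact le_inf' _ _ fun a _ => hπ.bellmanQ_le t s a

end IsValueFunction

theorem stmt16_general [DecidableEq A] [IsOrderedRing R] {z : S → R} {d : Fin (T + 1) → S → A → R}
    (hP : 0 ≤ P) (hz : 0 ≤ z) (hV : IsValueFunction P C V) (hπ : IsGreedy P C V π)
    (hd : IsInducedDistribution P z π d) :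
    (∑ t, ∑ s, ∑ a, C t s a * d t s a = ∑ s, V 0 s * z s) ∧
    (0 ≤ d ∧ IsFlow P z d) ∧
    ∀ x, 0 ≤ x ∧ IsFlow P z x →
      ∑ t, ∑ s, ∑ a, C t s a * d t s a ≤ ∑ t, ∑ s, ∑ a, C t s a * x t s a := by
  have cost_eq : ∑ t, ∑ s, ∑ a, C t s a * d t s a = ∑ s, V 0 s * z s :=
    hd.isFlow.sum_cost_mul_eq_sum_value_mul fun t s a h => by
      rw [hd.eq_policy_of_ne_zero h, hV.bellmanQ_policy_eq hπ]
  exact ⟨cost_eq, ⟨hd.nonneg hP hz, hd.isFlow⟩, fun x ⟨hx0, hx⟩ =>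
    cost_eq.trans_le (hx.sum_value_mul_le_sum_cost_mul hx0 hV.le_bellmanQ)⟩

end ValueIteration

theorem mem_feas_iff_s16 {S A : Type*} [Fintype S] [Fintype A] {T : ℕ}
    {P : Fin (T + 1) → S → S → A → ℝ} {z : S → ℝ} {x : Fin (T + 1) → S → A → ℝ} :
    x ∈ Feas T P z ↔ 0 ≤ x ∧ IsFlow (fun i : Fin T => P i.succ) z x :=
  ⟨fun ⟨hx0, hinitial, hstep⟩ => ⟨hx0, hinitial, fun i => hstep i i.2⟩,
    fun ⟨hx0, hx⟩ => ⟨hx0, hx.initial, fun t ht => hx.conserve ⟨t, ht⟩⟩⟩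

/-- With value functions V from backward value iteration, a greedy policy π,
and d the state-action distribution induced by π, we have
∑_{t,s,a} C(t,s,a) d(t,s,a) = ∑_s V(0,s) z₀(s); in particular d minimizes the linear cost
x ↦ ∑_{t,s,a} C(t,s,a) x(t,s,a) over 𝒳(P,z₀). -/
theorem stmt16 {S A : Type*} [Fintype S] [Fintype A] [Nonempty S] [Nonempty A]
    [DecidableEq A] {T : ℕ}
    (P : Fin (T+1) → S → S → A → ℝ) (hP : IsKernel T P)
    (z0 : S → ℝ) (hz0 : ∀ s, 0 ≤ z0 s)
    (C : Fin (T+1) → S → A → ℝ) (V : Fin (T+1) → S → ℝ)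
    (hVT : ∀ s, V (Fin.last T) s
      = Finset.univ.inf' Finset.univ_nonempty (fun a => C (Fin.last T) s a))
    (hVt : ∀ (t : ℕ) (ht : t < T), ∀ s,
      V ⟨t, by omega⟩ s = Finset.univ.inf' Finset.univ_nonempty (fun a =>
        C ⟨t, by omega⟩ s a
          + ∑ s', P ⟨t+1, by omega⟩ s' s a * V ⟨t+1, by omega⟩ s'))
    (π : Fin (T+1) → S → A)
    (hπT : ∀ s a, C (Fin.last T) s (π (Fin.last T) s) ≤ C (Fin.last T) s a)
    (hπt : ∀ (t : ℕ) (ht : t < T), ∀ s a,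
      C ⟨t, by omega⟩ s (π ⟨t, by omega⟩ s)
          + ∑ s', P ⟨t+1, by omega⟩ s' s (π ⟨t, by omega⟩ s) * V ⟨t+1, by omega⟩ s'
        ≤ C ⟨t, by omega⟩ s a
          + ∑ s', P ⟨t+1, by omega⟩ s' s a * V ⟨t+1, by omega⟩ s')
    (d : Fin (T+1) → S → A → ℝ)
    (hd0 : ∀ s a, d 0 s a = if a = π 0 s then z0 s else 0)
    (hdt : ∀ (t : ℕ) (ht : t < T), ∀ s a,
      d ⟨t+1, by omega⟩ s a =
        if a = π ⟨t+1, by omega⟩ s then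
          ∑ s', ∑ a', P ⟨t+1, by omega⟩ s s' a' * d ⟨t, by omega⟩ s' a'
        else 0) :
    (∑ t, ∑ s, ∑ a, C t s a * d t s a = ∑ s, V 0 s * z0 s) ∧
    d ∈ Feas T P z0 ∧
    ∀ x ∈ Feas T P z0,
      ∑ t, ∑ s, ∑ a, C t s a * d t s a ≤ ∑ t, ∑ s, ∑ a, C t s a * x t s a := by
  simpa only [mem_feas_iff_s16] using
    stmt16_general (P := fun i : Fin T => P i.succ) (fun i => hP.1 i.succ) hz0
      ⟨hVT, fun i => hVt i i.2⟩ ⟨hπT, fun i => hπt i i.2⟩ ⟨hd0, fun i => hdt i i.2⟩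
end
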